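/- arXiv:2109.01027 — 2 statements merged into one kernel-verified Lean document; each statement's English description precedes it below -/
import Mathlib

section
/- There exist ε₀ > 0 and a nondecreasing function φ : (0,1) → (0,1), both depending only on N, Λ and β, such that the following holds: for every ε with 0 < ε < ε₀, every admissible family of measures (ν_x), every Borel set A ⊆ Q₁ with |A| > 0, every x ∈ Q₁, and every process (X_k) as described with X_0 = x, one has P( T_A < τ_{Q_{10√N}} ) > φ(|A|), where T_A = inf{k ≥ 0 : X_k ∈ A} is the hitting time of A and τ_{Q_{10√N}} = inf{k ≥ 0 : X_k ∉ Q_{10√N}} is the exit time from Q_{10√N}. -/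
open MeasureTheory Metric
open scoped ENNReal

noncomputable section

/-- The open axis-parallel cube of side `r` centered at the origin. -/
def cubeO (N : ℕ) (r : ℝ) : Set (EuclideanSpace ℝ (Fin N)) :=
  {x | ∀ i, |x i| < r / 2}

/-!
The probability of reaching `A` before leaving `D`, as a function of the starting point, is a
nonnegative function `u` with `u = 1` on `A` that dominates its own average over one step of the
walk at each point of `D`. The theorem thus reduces to a lower bound for such supersolutions, and
this follows the Krylov–Safonov scheme. If `u` is small somewhere in a ball, then the difference of
a Gaussian bump and `u` is touched from above, near the center, by planes of every small slope. The
uniform part of the step bounds the change of slope between touching planes within one cell of side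
comparable to `ε`, and this discrete Alexandrov–Bakelman–Pucci argument bounds from below the volume
of the set where `u < 1` near the center. Contrapositively, `u` is bounded below on a cube if it is
large on most of a smaller one. A Calderón–Zygmund decomposition into dyadic cubes of side at least
a multiple of `ε` iterates this, starting from a set of arbitrarily small positive volume. Below
that scale, boundedly many steps suffice, whose uniform parts spread mass over balls of radius
comparable to `ε`.
-/

open Module (finrank)
open ProbabilityTheory (IsFiniteKernel IsMarkovKernel Kernel)
open scoped ProbabilityTheory RealInnerProductSpace

section UniformLaw

variable {E : Type*} [NormedAddCommGroup E] [InnerProductSpace ℝ E]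

lemma preimage_add_smul_ball {ε : ℝ} (hε : 0 < ε) (x y : E) (r : ℝ) :
    (fun z ↦ x + ε • z) ⁻¹' ball (x + ε • y) (ε * r) = ball y r := by
  ext z
  simp only [Set.mem_preimage, mem_ball, dist_add_left, dist_smul₀, Real.norm_eq_abs,
    abs_of_pos hε, mul_lt_mul_iff_right₀ hε]

lemma preimage_add_smul_ball_self {ε : ℝ} (hε : 0 < ε) (x : E) :
    (fun z ↦ x + ε • z) ⁻¹' ball x ε = ball 0 1 := by
  simpa using preimage_add_smul_ball hε x 0 1

variable [FiniteDimensional ℝ E] [MeasurableSpace E] [BorelSpace E]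

lemma volume_preimage_add_smul {ε : ℝ} (hε : 0 < ε) (x : E) (s : Set E) :
    volume ((fun z ↦ x + ε • z) ⁻¹' s) = ENNReal.ofReal (ε ^ finrank ℝ E)⁻¹ * volume s := by
  rw [show (fun z ↦ x + ε • z) ⁻¹' s = (ε • ·) ⁻¹' ((x + ·) ⁻¹' s) from rfl,
    Measure.addHaar_preimage_smul _ hε.ne', measure_preimage_add, abs_of_pos (by positivity)]

instance isProbabilityMeasure_cond_unitBall :
    IsProbabilityMeasure (volume[|ball (0 : E) 1]) :=
  ProbabilityTheory.cond_isProbabilityMeasure_of_finite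
    (measure_ball_pos _ _ one_pos).ne' measure_ball_lt_top.ne

lemma map_add_smul_cond_unitBall {ε : ℝ} (hε : 0 < ε) (x : E) :
    (volume[|ball (0 : E) 1]).map (fun z ↦ x + ε • z) = volume[|ball x ε] := by
  have haff : Measurable fun z : E ↦ x + ε • z := by fun_prop
  ext s hs
  rw [Measure.map_apply haff hs, ProbabilityTheory.cond_apply measurableSet_ball,
    ProbabilityTheory.cond_apply measurableSet_ball, ← preimage_add_smul_ball_self hε x,
    ← Set.preimage_inter, volume_preimage_add_smul hε, volume_preimage_add_smul hε,
    ENNReal.mul_inv (by simp [hε]) (by simp), mul_mul_mul_comm,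
    ENNReal.inv_mul_cancel (by simpa using by positivity) (by simp), one_mul]

lemma cond_unitBall_ball {r : ℝ} (hr : 0 < r) {y : E} (h : ball y r ⊆ ball 0 1) :
    volume[ball y r | ball (0 : E) 1] = ENNReal.ofReal (r ^ finrank ℝ E) := by
  rw [ProbabilityTheory.cond_apply measurableSet_ball, Set.inter_eq_right.2 h,
    Measure.addHaar_ball_of_pos _ _ hr, mul_left_comm, ENNReal.inv_mul_cancel
      (measure_ball_pos _ _ one_pos).ne' measure_ball_lt_top.ne, mul_one]

lemma setLIntegral_ball_eq_mul_lintegral_cond {ε : ℝ} (hε : 0 < ε) (x : E) {f : E → ℝ≥0∞}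
    (hf : Measurable f) :
    ∫⁻ y in ball x ε, f y
      = volume (ball x ε) * ∫⁻ z, f (x + ε • z) ∂volume[|ball (0 : E) 1] := by
  rw [← lintegral_map hf (g := fun z ↦ x + ε • z) (by fun_prop), map_add_smul_cond_unitBall hε,
    ProbabilityTheory.cond, lintegral_smul_measure, smul_eq_mul, ← mul_assoc,
    ENNReal.mul_inv_cancel (measure_ball_pos _ _ hε).ne' measure_ball_lt_top.ne, one_mul]

lemma setAverage_ball_eq_integral_cond {ε : ℝ} (hε : 0 < ε) (x : E) {f : E → ℝ}
    (hf : Measurable f) :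
    ⨍ y in ball x ε, f y = ∫ z, f (x + ε • z) ∂volume[|ball (0 : E) 1] := by
  rw [← integral_map (by fun_prop) hf.aestronglyMeasurable, map_add_smul_cond_unitBall hε,
    setAverage_eq', ProbabilityTheory.cond]

instance isNegInvariant_cond_unitBall : (volume[|ball (0 : E) 1]).IsNegInvariant := by
  constructor
  ext s -
  rw [Measure.neg_apply, ProbabilityTheory.cond_apply measurableSet_ball,
    ProbabilityTheory.cond_apply measurableSet_ball, ← Measure.measure_neg volume (_ ∩ s),
    Set.inter_neg, neg_ball, neg_zero]

end UniformLaw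

section StepLaw

variable {E : Type*} [NormedAddCommGroup E] [InnerProductSpace ℝ E] [FiniteDimensional ℝ E]
  [MeasurableSpace E] [BorelSpace E] {Λ β : ℝ} {ρ : Measure E}

/-- `ρ` is a possible law of one rescaled step of the walk: a symmetric probability measure, carried
by the ball of radius `Λ`, that dominates `β` times the uniform law of the unit ball. -/
structure IsStepLaw (Λ β : ℝ) (ρ : Measure E) : Prop where
  isProbabilityMeasure : IsProbabilityMeasure ρ
  measure_compl_closedBall : ρ (closedBall 0 Λ)ᶜ = 0
  isNegInvariant : ρ.IsNegInvariant
  smul_cond_le : ENNReal.ofReal β • volume[|ball (0 : E) 1] ≤ ρ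

/-- `u` is a nonnegative bounded function that is a supersolution on `D` of the dynamic programming
equation `u x = ∫ u (x + ε z) dρ_x(z)`. -/
structure IsSupersolution (ε : ℝ) (ρ : E → Measure E) (D : Set E) (u : E → ℝ) : Prop where
  measurable : Measurable u
  nonneg : ∀ x, 0 ≤ u x
  bounded : ∃ M, ∀ x, u x ≤ M
  integral_le : ∀ x ∈ D, ∫ z, u (x + ε • z) ∂ρ x ≤ u x

omit [FiniteDimensional ℝ E] [BorelSpace E] in
lemma IsSupersolution.mono {ε : ℝ} {ρ : E → Measure E} {D D' : Set E} {u : E → ℝ}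
    (hu : IsSupersolution ε ρ D u) (hD : D' ⊆ D) : IsSupersolution ε ρ D' u where
  __ := hu
  integral_le x hx := hu.integral_le x (hD hx)

lemma IsStepLaw.ae_norm_le (h : IsStepLaw Λ β ρ) : ∀ᵐ z ∂ρ, ‖z‖ ≤ Λ := by
  filter_upwards [mem_ae_iff.2 h.measure_compl_closedBall] with z hz
  simpa using hz

lemma IsStepLaw.integrable_of_bound (h : IsStepLaw Λ β ρ) {g : E → ℝ} (hg : Measurable g) {M : ℝ}
    (hM : ∀ z, ‖z‖ ≤ Λ → |g z| ≤ M) : Integrable g ρ := by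
  have := h.isProbabilityMeasure
  refine Integrable.of_bound hg.aestronglyMeasurable M ?_
  filter_upwards [h.ae_norm_le] with z hz using hM z hz

lemma IsStepLaw.setLIntegral_ball_le (h : IsStepLaw Λ β ρ) (hβ : 0 < β) {ε : ℝ} (hε : 0 < ε)
    (x : E) {f : E → ℝ} (hf : Measurable f) (hint : Integrable (fun z ↦ f (x + ε • z)) ρ)
    (h0 : ∀ z, ‖z‖ ≤ Λ → 0 ≤ f (x + ε • z)) {I : ℝ} (hI : ∫ z, f (x + ε • z) ∂ρ ≤ I) :
    ∫⁻ y in ball x ε, ENNReal.ofReal (f y) ≤ ENNReal.ofReal (I / β) * volume (ball x ε) := by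
  rw [setLIntegral_ball_eq_mul_lintegral_cond hε x hf.ennreal_ofReal, mul_comm,
    ENNReal.ofReal_div_of_pos hβ]
  gcongr
  rw [ENNReal.le_div_iff_mul_le (.inl <| by simpa using hβ) (.inl ENNReal.ofReal_ne_top), mul_comm]
  calc ENNReal.ofReal β * ∫⁻ z, ENNReal.ofReal (f (x + ε • z)) ∂volume[|ball (0 : E) 1]
      = ∫⁻ z, ENNReal.ofReal (f (x + ε • z)) ∂(ENNReal.ofReal β • volume[|ball (0 : E) 1]) := by
        rw [lintegral_smul_measure, smul_eq_mul]
    _ ≤ ∫⁻ z, ENNReal.ofReal (f (x + ε • z)) ∂ρ := lintegral_mono' h.smul_cond_le le_rfl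
    _ = ENNReal.ofReal (∫ z, f (x + ε • z) ∂ρ) := by
        rw [ofReal_integral_eq_lintegral_ofReal hint]
        filter_upwards [h.ae_norm_le] with z hz using h0 z hz
    _ ≤ ENNReal.ofReal I := ENNReal.ofReal_le_ofReal hI

end StepLaw

section SecondMoment

variable {E : Type*} [NormedAddCommGroup E] [InnerProductSpace ℝ E]

lemma ball_half_smul_subset_unitBall {e : E} (he : ‖e‖ = 1) :
    ball ((1 / 2 : ℝ) • e) (1 / 4) ⊆ ball 0 1 :=
  ball_subset_ball' <| by rw [dist_zero_right, norm_smul, he]; norm_num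

lemma one_quarter_le_inner_of_mem_ball {e z : E} (he : ‖e‖ = 1)
    (hz : z ∈ ball ((1 / 2 : ℝ) • e) (1 / 4)) : 1 / 4 ≤ ⟪e, z⟫ := by
  have hsplit : ⟪e, z⟫ = ⟪e, z - (1 / 2 : ℝ) • e⟫ + 1 / 2 := by
    rw [inner_sub_right, inner_smul_right, real_inner_self_eq_norm_sq, he]; ring
  have hcs := abs_real_inner_le_norm e (z - (1 / 2 : ℝ) • e)
  rw [mem_ball_iff_norm] at hz
  rw [he, one_mul] at hcs
  linarith [neg_abs_le ⟪e, z - (1 / 2 : ℝ) • e⟫]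

lemma exists_norm_eq_one_smul_eq {x : E} (hx : x ≠ 0) : ∃ e : E, ‖e‖ = 1 ∧ ‖x‖ • e = x :=
  ⟨‖x‖⁻¹ • x, by simp [norm_smul, hx], by simp [smul_smul, hx]⟩

variable [FiniteDimensional ℝ E] [MeasurableSpace E] [BorelSpace E] {Λ β : ℝ} {ρ : Measure E}

lemma IsStepLaw.integrable_inner_sq (h : IsStepLaw Λ β ρ) (x : E) :
    Integrable (fun z ↦ ⟪x, z⟫ ^ 2) ρ := by
  refine h.integrable_of_bound (by fun_prop) (M := (‖x‖ * Λ) ^ 2) fun z hz ↦ ?_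
  rw [abs_pow]
  gcongr
  exact (abs_real_inner_le_norm x z).trans (by gcongr)

lemma IsStepLaw.le_measureReal_ball (h : IsStepLaw Λ β ρ) (hβ : 0 ≤ β) {y : E} {r : ℝ}
    (hr : 0 < r) (hsub : ball y r ⊆ ball 0 1) :
    β * r ^ finrank ℝ E ≤ ρ.real (ball y r) := by
  have := h.isProbabilityMeasure
  have hle := h.smul_cond_le (ball y r)
  rw [Measure.smul_apply, smul_eq_mul, cond_unitBall_ball hr hsub, ← ENNReal.ofReal_mul hβ] at hle
  exact (ENNReal.ofReal_le_iff_le_toReal (measure_ne_top _ _)).1 hle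

lemma IsStepLaw.le_integral_inner_sq (h : IsStepLaw Λ β ρ) (hβ : 0 ≤ β) (x : E) :
    β * ((1 / 4) ^ finrank ℝ E / 16) * ‖x‖ ^ 2 ≤ ∫ z, ⟪x, z⟫ ^ 2 ∂ρ := by
  have := h.isProbabilityMeasure
  rcases eq_or_ne x 0 with rfl | hx
  · simp
  obtain ⟨e, he, hxe⟩ := exists_norm_eq_one_smul_eq hx
  have hle : ∀ z ∈ ball ((1 / 2 : ℝ) • e) (1 / 4), ‖x‖ ^ 2 / 16 ≤ ⟪x, z⟫ ^ 2 := fun z hz ↦ by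
    have hez := one_quarter_le_inner_of_mem_ball he hz
    calc ‖x‖ ^ 2 / 16 = ‖x‖ ^ 2 * (1 / 4) ^ 2 := by ring
      _ ≤ ‖x‖ ^ 2 * ⟪e, z⟫ ^ 2 := by gcongr
      _ = ⟪x, z⟫ ^ 2 := by rw [← mul_pow, ← real_inner_smul_left, hxe]
  calc β * ((1 / 4) ^ finrank ℝ E / 16) * ‖x‖ ^ 2
      = ‖x‖ ^ 2 / 16 * (β * (1 / 4) ^ finrank ℝ E) := by ring
    _ ≤ ‖x‖ ^ 2 / 16 * ρ.real (ball ((1 / 2 : ℝ) • e) (1 / 4)) := by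
        gcongr
        exact h.le_measureReal_ball hβ (by norm_num) (ball_half_smul_subset_unitBall he)
    _ ≤ ∫ z in ball ((1 / 2 : ℝ) • e) (1 / 4), ⟪x, z⟫ ^ 2 ∂ρ := by
        simpa [mul_comm] using setIntegral_ge_of_const_le measurableSet_ball (measure_ne_top _ _)
          hle (h.integrable_inner_sq x).integrableOn
    _ ≤ ∫ z, ⟪x, z⟫ ^ 2 ∂ρ :=
        setIntegral_le_integral (h.integrable_inner_sq x) (.of_forall fun z ↦ sq_nonneg _)

end SecondMoment

section Gaussian

lemma one_add_sq_div_two_le_cosh (t : ℝ) : 1 + t ^ 2 / 2 ≤ Real.cosh t := by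
  have hcosh : Real.cosh t = 1 + 2 * Real.sinh (t / 2) ^ 2 := by
    have h := Real.cosh_two_mul (t / 2)
    rw [Real.cosh_sq, show 2 * (t / 2) = t by ring] at h
    linarith
  have hsinh : (t / 2) ^ 2 ≤ Real.sinh (t / 2) ^ 2 := by
    rw [sq_le_sq, Real.abs_sinh]
    exact Real.self_le_sinh_iff.2 (abs_nonneg _)
  linarith

lemma integral_half_add_comp_neg {E : Type*} [AddGroup E] [MeasurableSpace E] [MeasurableNeg E]
    {ρ : Measure E} [ρ.IsNegInvariant] {f : E → ℝ} (hf : Integrable f ρ) :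
    ∫ z, (f z + f (-z)) / 2 ∂ρ = ∫ z, f z ∂ρ := by
  rw [integral_div, integral_add hf hf.comp_neg, integral_neg_eq_self, add_self_div_two]

variable {E : Type*} [NormedAddCommGroup E] [InnerProductSpace ℝ E]

lemma exp_neg_mul_norm_add_sq_add_exp_neg_mul_norm_sub_sq (l ε : ℝ) (x z : E) :
    Real.exp (-l * ‖x + ε • z‖ ^ 2) + Real.exp (-l * ‖x - ε • z‖ ^ 2)
      = 2 * (Real.exp (-l * ‖x‖ ^ 2) * (Real.exp (-(l * ε ^ 2 * ‖z‖ ^ 2)) *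
        Real.cosh (2 * l * ε * ⟪x, z⟫))) := by
  simp only [norm_add_sq_real, norm_sub_sq_real, norm_smul, real_inner_smul_right, mul_pow,
    Real.norm_eq_abs, sq_abs, Real.cosh_eq, mul_div_cancel₀ _ (two_ne_zero' ℝ), mul_add, add_div,
    mul_div_assoc', ← Real.exp_add]
  ring_nf

variable [FiniteDimensional ℝ E] [MeasurableSpace E] [BorelSpace E] {Λ β : ℝ} {ρ : Measure E}

lemma IsStepLaw.integrable_gaussian (h : IsStepLaw Λ β ρ) {l : ℝ} (hl : 0 ≤ l) (ε : ℝ) (x : E) :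
    Integrable (fun z ↦ Real.exp (-l * ‖x + ε • z‖ ^ 2)) ρ := by
  refine h.integrable_of_bound (by fun_prop) (M := 1) fun z _ ↦ ?_
  rw [abs_of_pos (Real.exp_pos _), Real.exp_le_one_iff]
  nlinarith [mul_nonneg hl (sq_nonneg ‖x + ε • z‖)]

lemma IsStepLaw.mul_le_integral_gaussian (h : IsStepLaw Λ β ρ) (hβ : 0 ≤ β) {l ε : ℝ} (hl : 0 ≤ l)
    (ht : l * ε ^ 2 * Λ ^ 2 ≤ 1) (x : E) :
    Real.exp (-l * ‖x‖ ^ 2) * ((1 - l * ε ^ 2 * Λ ^ 2) *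
      (1 + 2 * l ^ 2 * ε ^ 2 * (β * ((1 / 4) ^ finrank ℝ E / 16) * ‖x‖ ^ 2))) ≤
    ∫ z, Real.exp (-l * ‖x + ε • z‖ ^ 2) ∂ρ := by
  have := h.isProbabilityMeasure
  have : 0 ≤ 1 - l * ε ^ 2 * Λ ^ 2 := sub_nonneg.2 ht
  have := h.isNegInvariant
  have hint := (h.integrable_inner_sq x).const_mul (2 * l ^ 2 * ε ^ 2)
  have hG := h.integrable_gaussian hl ε x
  calc Real.exp (-l * ‖x‖ ^ 2) * ((1 - l * ε ^ 2 * Λ ^ 2) *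
      (1 + 2 * l ^ 2 * ε ^ 2 * (β * ((1 / 4) ^ finrank ℝ E / 16) * ‖x‖ ^ 2)))
      ≤ Real.exp (-l * ‖x‖ ^ 2) * ((1 - l * ε ^ 2 * Λ ^ 2) *
        (1 + 2 * l ^ 2 * ε ^ 2 * ∫ z, ⟪x, z⟫ ^ 2 ∂ρ)) := by
        gcongr
        exact h.le_integral_inner_sq hβ x
    _ = ∫ z, Real.exp (-l * ‖x‖ ^ 2) * ((1 - l * ε ^ 2 * Λ ^ 2) *
        (1 + 2 * l ^ 2 * ε ^ 2 * ⟪x, z⟫ ^ 2)) ∂ρ := by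
        simp [integral_const_mul, integral_add (integrable_const _) hint]
    _ ≤ ∫ z, (Real.exp (-l * ‖x + ε • z‖ ^ 2) + Real.exp (-l * ‖x + ε • -z‖ ^ 2)) / 2 ∂ρ := by
        refine integral_mono_of_nonneg (.of_forall fun z ↦ by positivity)
          ((hG.add hG.comp_neg).div_const 2) ?_
        filter_upwards [h.ae_norm_le] with z hz
        rw [smul_neg, ← sub_eq_add_neg, exp_neg_mul_norm_add_sq_add_exp_neg_mul_norm_sub_sq,
          mul_div_cancel_left₀ _ two_ne_zero]
        have hexp : 1 - l * ε ^ 2 * Λ ^ 2 ≤ Real.exp (-(l * ε ^ 2 * ‖z‖ ^ 2)) :=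
          le_trans (by gcongr) (Real.one_sub_le_exp_neg _)
        have hcosh : 1 + 2 * l ^ 2 * ε ^ 2 * ⟪x, z⟫ ^ 2 ≤ Real.cosh (2 * l * ε * ⟪x, z⟫) :=
          le_of_eq_of_le (by ring) (one_add_sq_div_two_le_cosh _)
        gcongr
    _ = ∫ z, Real.exp (-l * ‖x + ε • z‖ ^ 2) ∂ρ := integral_half_add_comp_neg hG

variable {l ε : ℝ} (h : IsStepLaw Λ β ρ) (hβ : 0 ≤ β) (hl : 0 ≤ l)
  (hlβ : l * (β * ((1 / 4) ^ finrank ℝ E / 16)) = 32 * Λ ^ 2) (ht : l * ε ^ 2 * Λ ^ 2 ≤ 1 / 2)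
include h hβ hl hlβ ht

lemma IsStepLaw.quadratic_mul_gaussian_le (x : E) :
    (1 - l * ε ^ 2 * Λ ^ 2) * (1 + 64 * (l * ε ^ 2 * Λ ^ 2) * ‖x‖ ^ 2) * Real.exp (-l * ‖x‖ ^ 2)
      ≤ ∫ z, Real.exp (-l * ‖x + ε • z‖ ^ 2) ∂ρ := by
  refine le_of_eq_of_le ?_ (h.mul_le_integral_gaussian hβ hl (by linarith) x)
  rw [show 2 * l ^ 2 * ε ^ 2 * (β * ((1 / 4) ^ finrank ℝ E / 16) * ‖x‖ ^ 2)
    = 2 * l * ε ^ 2 * (l * (β * ((1 / 4) ^ finrank ℝ E / 16))) * ‖x‖ ^ 2 by ring, hlβ]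
  ring

lemma IsStepLaw.one_sub_mul_gaussian_le (x : E) :
    (1 - l * ε ^ 2 * Λ ^ 2) * Real.exp (-l * ‖x‖ ^ 2)
      ≤ ∫ z, Real.exp (-l * ‖x + ε • z‖ ^ 2) ∂ρ := by
  refine le_trans ?_ (h.quadratic_mul_gaussian_le hβ hl hlβ ht x)
  gcongr
  exact le_mul_of_one_le_right (by linarith) (le_add_of_nonneg_right (by positivity))

lemma IsStepLaw.one_add_mul_gaussian_le {x : E} (hx : 1 / 4 ≤ ‖x‖) :
    (1 + l * ε ^ 2 * Λ ^ 2) * Real.exp (-l * ‖x‖ ^ 2)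
      ≤ ∫ z, Real.exp (-l * ‖x + ε • z‖ ^ 2) ∂ρ := by
  refine le_trans ?_ (h.quadratic_mul_gaussian_le hβ hl hlβ ht x)
  have ht0 : 0 ≤ l * ε ^ 2 * Λ ^ 2 := by positivity
  have hgrowth : 4 * (l * ε ^ 2 * Λ ^ 2) ≤ 64 * (l * ε ^ 2 * Λ ^ 2) * ‖x‖ ^ 2 := by
    calc 4 * (l * ε ^ 2 * Λ ^ 2) = 64 * (l * ε ^ 2 * Λ ^ 2) * (1 / 4) ^ 2 := by ring
      _ ≤ _ := by gcongr
  gcongr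
  nlinarith

end Gaussian

section Slope

variable {E : Type*} [NormedAddCommGroup E] [InnerProductSpace ℝ E]

lemma exists_ball_mul_le_abs_add_inner {ε : ℝ} (hε : 0 < ε) (v x : E) (c : ℝ) :
    ∃ z, ball z (ε / 8) ⊆ ball x (ε / 2) ∧
      ∀ y ∈ ball z (ε / 8), ‖v‖ * (ε / 8) ≤ |c + ⟪v, y⟫| := by
  wlog hc : 0 ≤ c + ⟪v, x⟫ generalizing c v
  · obtain ⟨z, hz, hle⟩ := this (-v) (-c) (by rw [inner_neg_left]; linarith)
    refine ⟨z, hz, fun y hy ↦ ?_⟩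
    simpa only [norm_neg, inner_neg_left, ← neg_add, abs_neg] using hle y hy
  obtain ⟨e, he, hve⟩ : ∃ e : E, ‖e‖ ≤ 1 ∧ ⟪v, e⟫ = ‖v‖ := by
    rcases eq_or_ne v 0 with rfl | hv
    · exact ⟨0, by simp, by simp⟩
    · obtain ⟨e, he, hev⟩ := exists_norm_eq_one_smul_eq hv
      refine ⟨e, he.le, ?_⟩
      nth_rw 1 [← hev]
      rw [real_inner_smul_left, real_inner_self_eq_norm_sq, he, one_pow, mul_one]
  refine ⟨x + (ε / 4) • e, ball_subset_ball' ?_, fun y hy ↦ ?_⟩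
  · rw [dist_self_add_left, norm_smul, Real.norm_of_nonneg (by positivity)]
    nlinarith
  · have hy' : ‖y - (x + (ε / 4) • e)‖ ≤ ε / 8 := (mem_ball_iff_norm.1 hy).le
    have herr : |⟪v, y - (x + (ε / 4) • e)⟫| ≤ ‖v‖ * (ε / 8) :=
      (abs_real_inner_le_norm _ _).trans (by gcongr)
    have hsplit : ⟪v, y⟫ = ⟪v, x⟫ + ε / 4 * ‖v‖ + ⟪v, y - (x + (ε / 4) • e)⟫ := by
      rw [inner_sub_right, inner_add_right, real_inner_smul_right, hve]; ring
    linarith [neg_abs_le ⟪v, y - (x + (ε / 4) • e)⟫, le_abs_self (c + ⟪v, y⟫)]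

variable [FiniteDimensional ℝ E] [MeasurableSpace E] [BorelSpace E]

/-- The plane `y ↦ C + ⟪p, y⟫` lies above `w` on the ball of radius `ε` at `x`, and is so close to
`w` there that the mean gap is at most `J`. This replaces the touching planes of the
Alexandrov–Bakelman–Pucci argument. -/
structure TouchesFromAbove (w : E → ℝ) (ε J : ℝ) (x p : E) (C : ℝ) : Prop where
  le_plane : ∀ y ∈ ball x ε, w y ≤ C + ⟪p, y⟫
  setLIntegral_gap_le :
    ∫⁻ y in ball x ε, ENNReal.ofReal (C + ⟪p, y⟫ - w y) ≤ ENNReal.ofReal J * volume (ball x ε)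

variable {w : E → ℝ} {ε J : ℝ}

lemma ofReal_mul_volume_le_of_touchesFromAbove (hw : Measurable w) {x x' p p' z : E}
    {C C' a r : ℝ} (h : TouchesFromAbove w ε J x p C) (h' : TouchesFromAbove w ε J x' p' C')
    (hx : ball z r ⊆ ball x ε) (hx' : ball z r ⊆ ball x' ε)
    (ha : ∀ y ∈ ball z r, a ≤ |C - C' + ⟪p - p', y⟫|) :
    ENNReal.ofReal a * volume (ball z r)
      ≤ ENNReal.ofReal J * volume (ball x ε) + ENNReal.ofReal J * volume (ball x' ε) := by
  have hmeas : Measurable fun y ↦ ENNReal.ofReal (C + ⟪p, y⟫ - w y) := by fun_prop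
  calc ENNReal.ofReal a * volume (ball z r)
      = ∫⁻ _ in ball z r, ENNReal.ofReal a := (setLIntegral_const _ _).symm
    _ ≤ ∫⁻ y in ball z r,
          (ENNReal.ofReal (C + ⟪p, y⟫ - w y) + ENNReal.ofReal (C' + ⟪p', y⟫ - w y)) := by
        refine setLIntegral_mono' measurableSet_ball fun y hy ↦ ?_
        have hgap := h.le_plane y (hx hy)
        have hgap' := h'.le_plane y (hx' hy)
        rw [← ENNReal.ofReal_add (sub_nonneg.2 hgap) (sub_nonneg.2 hgap')]
        refine ENNReal.ofReal_le_ofReal ((ha y hy).trans (abs_le.2 ?_))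
        rw [inner_sub_left]
        constructor <;> linarith
    _ = (∫⁻ y in ball z r, ENNReal.ofReal (C + ⟪p, y⟫ - w y))
          + ∫⁻ y in ball z r, ENNReal.ofReal (C' + ⟪p', y⟫ - w y) := lintegral_add_left hmeas _
    _ ≤ _ := add_le_add ((lintegral_mono_set hx).trans h.setLIntegral_gap_le)
        ((lintegral_mono_set hx').trans h'.setLIntegral_gap_le)

lemma TouchesFromAbove.norm_sub_le (hw : Measurable w) (hε : 0 < ε) (hJ : 0 ≤ J) {x x' p p' : E}
    {C C' : ℝ} (h : TouchesFromAbove w ε J x p C) (h' : TouchesFromAbove w ε J x' p' C')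
    (hxx' : dist x x' < ε / 2) : ‖p - p'‖ ≤ 16 * 8 ^ finrank ℝ E * J / ε := by
  obtain ⟨z, hz, hle⟩ := exists_ball_mul_le_abs_add_inner hε (p - p') x (C - C')
  have hvol := ofReal_mul_volume_le_of_touchesFromAbove hw h h'
    (hz.trans (ball_subset_ball (by linarith))) (hz.trans (ball_subset_ball' (by linarith))) hle
  rw [Measure.addHaar_ball_of_pos _ _ (by positivity : 0 < ε / 8),
    Measure.addHaar_ball_of_pos _ _ hε, Measure.addHaar_ball_of_pos _ _ hε, ← two_mul,
    ← mul_assoc, ← mul_assoc, ← mul_assoc,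
    ENNReal.mul_le_mul_iff_left (measure_ball_pos _ _ one_pos).ne' measure_ball_lt_top.ne,
    ← ENNReal.ofReal_ofNat 2, ← ENNReal.ofReal_mul (by positivity),
    ← ENNReal.ofReal_mul (by positivity), ← ENNReal.ofReal_mul (by positivity),
    ENNReal.ofReal_le_ofReal_iff (by positivity), div_pow] at hvol
  rw [le_div_iff₀ hε]
  field_simp at hvol
  linarith

end Slope

section Barrier

/-- The Gaussian barrier `y ↦ (exp (-l ‖y‖²) - exp (-16 l R²)) / 2`, which is positive exactly
inside the ball of radius `4 R`. -/
def barrier {E : Type*} [NormedAddCommGroup E] (l R : ℝ) (y : E) : ℝ :=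
  (Real.exp (-l * ‖y‖ ^ 2) - Real.exp (-l * (4 * R) ^ 2)) / 2

/-- Half of the minimum of the barrier over the ball of radius `3 R / 2`. -/
def barrierLevel (l R : ℝ) : ℝ :=
  (Real.exp (-l * (3 / 2 * R) ^ 2) - Real.exp (-l * (4 * R) ^ 2)) / 4

lemma exp_neg_mul_sq_le {l a b : ℝ} (hl : 0 ≤ l) (ha : 0 ≤ a) (hab : a ≤ b) :
    Real.exp (-l * b ^ 2) ≤ Real.exp (-l * a ^ 2) := by
  rw [Real.exp_le_exp, neg_mul, neg_mul, neg_le_neg_iff]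
  gcongr

lemma exp_neg_mul_sq_le_one {l : ℝ} (hl : 0 ≤ l) (a : ℝ) : Real.exp (-l * a ^ 2) ≤ 1 := by
  rw [Real.exp_le_one_iff, neg_mul, neg_nonpos]
  positivity

variable {E : Type*} [NormedAddCommGroup E] {l R : ℝ} {y : E}

lemma measurable_barrier [MeasurableSpace E] [BorelSpace E] (l R : ℝ) :
    Measurable (barrier l R : E → ℝ) := by
  unfold barrier
  fun_prop

lemma barrier_le_half (hl : 0 ≤ l) : barrier l R y ≤ 1 / 2 := by
  unfold barrier
  linarith [exp_neg_mul_sq_le_one hl ‖y‖, Real.exp_pos (-l * (4 * R) ^ 2)]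

lemma barrier_nonpos (hl : 0 ≤ l) (hR : 0 ≤ R) (hy : 4 * R ≤ ‖y‖) : barrier l R y ≤ 0 := by
  unfold barrier
  linarith [exp_neg_mul_sq_le hl (by positivity) hy]

lemma two_mul_barrierLevel_le (hl : 0 ≤ l) (hy : ‖y‖ ≤ 3 / 2 * R) :
    2 * barrierLevel l R ≤ barrier l R y := by
  unfold barrier barrierLevel
  linarith [exp_neg_mul_sq_le hl (norm_nonneg y) hy]

lemma barrierLevel_pos (hl : 0 < l) (hR : 0 < R) : 0 < barrierLevel l R := by
  have : Real.exp (-l * (4 * R) ^ 2) < Real.exp (-l * (3 / 2 * R) ^ 2) := by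
    rw [Real.exp_lt_exp]
    nlinarith [mul_pos hl (pow_pos hR 2)]
  unfold barrierLevel
  linarith

lemma barrierLevel_le_quarter (hl : 0 ≤ l) : barrierLevel l R ≤ 1 / 4 := by
  unfold barrierLevel
  linarith [exp_neg_mul_sq_le_one hl (3 / 2 * R), Real.exp_pos (-l * (4 * R) ^ 2)]

end Barrier

section NearMaximizer

lemma exists_mem_forall_le_add {α : Type*} {s : Set α} (hs : s.Nonempty) {f : α → ℝ}
    (hf : BddAbove (f '' s)) {η : ℝ} (hη : 0 < η) : ∃ x ∈ s, ∀ y ∈ s, f y ≤ f x + η := by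
  obtain ⟨_, ⟨x, hx, rfl⟩, hlt⟩ :=
    exists_lt_of_lt_csSup (hs.image f) (sub_lt_self (sSup (f '' s)) hη)
  exact ⟨x, hx, fun y hy ↦ by linarith [le_csSup hf (Set.mem_image_of_mem f hy)]⟩

variable {E : Type*} [NormedAddCommGroup E] [InnerProductSpace ℝ E] {l R η : ℝ} {u : E → ℝ}
  {p x x₀ : E}

lemma add_smul_mem_ball {Λ ε : ℝ} (hR : 1 ≤ R) (hε : 0 ≤ ε) (hεΛ : ε * Λ ≤ 1) (hx : ‖x‖ < 4 * R)
    {z : E} (hz : ‖z‖ ≤ Λ) : x + ε • z ∈ ball 0 (5 * R) := by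
  have hstep : ‖ε • z‖ ≤ ε * Λ := by rw [norm_smul, Real.norm_of_nonneg hε]; gcongr
  rw [mem_ball_zero_iff]
  linarith [norm_add_le x (ε • z)]

lemma abs_inner_sub_le_of_norm_le {a : ℝ} (ha : 0 ≤ a) (hR : 0 < R) (hp : ‖p‖ ≤ a / (26 * R))
    (hx₀ : ‖x₀‖ ≤ 3 / 2 * R) {y : E} (hy : y ∈ ball 0 (5 * R)) : |⟪p, y - x₀⟫| ≤ a / 4 := by
  rw [mem_ball_zero_iff] at hy
  have hdist : ‖y - x₀‖ ≤ 13 / 2 * R := (norm_sub_le _ _).trans (by linarith)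
  calc |⟪p, y - x₀⟫| ≤ ‖p‖ * ‖y - x₀‖ := abs_real_inner_le_norm _ _
    _ ≤ a / (26 * R) * (13 / 2 * R) := by gcongr
    _ = a / 4 := by field_simp; ring

lemma exists_nearMaximizer (hl : 0 ≤ l) (hR : 0 < R) (hu : ∀ y, 0 ≤ u y) (p : E) (hη : 0 < η) :
    ∃ x ∈ ball 0 (5 * R), ∀ y ∈ ball 0 (5 * R),
      barrier l R y - u y - ⟪p, y⟫ ≤ barrier l R x - u x - ⟪p, x⟫ + η := by
  refine exists_mem_forall_le_add (nonempty_ball.2 (by positivity))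
    (f := fun y ↦ barrier l R y - u y - ⟪p, y⟫) ⟨1 / 2 + ‖p‖ * (5 * R), ?_⟩ hη
  rintro _ ⟨y, hy, rfl⟩
  have hinner : |⟪p, y⟫| ≤ ‖p‖ * (5 * R) :=
    (abs_real_inner_le_norm p y).trans (by gcongr; exact (mem_ball_zero_iff.1 hy).le)
  dsimp only
  linarith [hu y, barrier_le_half hl (R := R) (y := y), neg_abs_le ⟪p, y⟫]

variable (hmax : ∀ y ∈ ball 0 (5 * R),
  barrier l R y - u y - ⟪p, y⟫ ≤ barrier l R x - u x - ⟪p, x⟫ + η)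
include hmax

lemma norm_lt_of_nearMaximizer (hl : 0 < l) (hR : 0 < R) (hu : ∀ y, 0 ≤ u y)
    (hx : x ∈ ball 0 (5 * R)) (hx₀ : ‖x₀‖ ≤ 3 / 2 * R) (hux₀ : u x₀ < barrierLevel l R)
    (hη : η ≤ barrierLevel l R / 4)
    (hp : ∀ y ∈ ball 0 (5 * R), |⟪p, y - x₀⟫| ≤ barrierLevel l R / 4) : ‖x‖ < 4 * R := by
  by_contra! hfar
  have hmax₀ := hmax x₀ (mem_ball_zero_iff.2 (by linarith))
  have hpx := abs_le.1 (hp x hx)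
  rw [inner_sub_right] at hpx
  linarith [hu x, barrier_nonpos hl.le hR.le hfar, two_mul_barrierLevel_le hl.le hx₀,
    barrierLevel_pos hl hR]

lemma quarter_le_gap_of_nearMaximizer (hl : 0 ≤ l) (hx₀ : ‖x₀‖ ≤ 3 / 2 * R)
    (hR : 0 < R) (hux₀ : u x₀ < barrierLevel l R) {y : E}
    (hp : |⟪p, y - x₀⟫| ≤ barrierLevel l R / 4) (huy : 1 ≤ u y) :
    1 / 4 ≤ barrier l R x - u x - ⟪p, x⟫ + η + ⟪p, y⟫ - (barrier l R y - u y) := by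
  have hmax₀ := hmax x₀ (mem_ball_zero_iff.2 (by linarith))
  have hpy := abs_le.1 hp
  rw [inner_sub_right] at hpy
  linarith [barrier_le_half hl (R := R) (y := y), two_mul_barrierLevel_le hl hx₀]

lemma gap_nonneg_of_nearMaximizer {y : E} (hy : y ∈ ball 0 (5 * R)) :
    0 ≤ barrier l R x - u x - ⟪p, x⟫ + η + ⟪p, y⟫ - (barrier l R y - u y) := by
  linarith [hmax y hy]

end NearMaximizer

section Contact

variable {E : Type*} [NormedAddCommGroup E] [InnerProductSpace ℝ E] [FiniteDimensional ℝ E]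
  [MeasurableSpace E] [BorelSpace E] {Λ β : ℝ} {ρ : Measure E}

lemma IsStepLaw.integrable_inner (h : IsStepLaw Λ β ρ) (p : E) :
    Integrable (fun z ↦ ⟪p, z⟫) ρ :=
  h.integrable_of_bound (by fun_prop) fun z hz ↦
    (abs_real_inner_le_norm p z).trans (mul_le_mul_of_nonneg_left hz (norm_nonneg p))

lemma IsStepLaw.integral_inner_eq_zero (h : IsStepLaw Λ β ρ) (p : E) : ∫ z, ⟪p, z⟫ ∂ρ = 0 := by
  have := h.isNegInvariant
  have hneg := integral_neg_eq_self (fun z ↦ ⟪p, z⟫) ρ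
  simp only [inner_neg_right, integral_neg] at hneg
  linarith

lemma IsStepLaw.integral_affine_sub (h : IsStepLaw Λ β ρ) (ε C : ℝ) (p x : E) {w : E → ℝ}
    (hw : Integrable (fun z ↦ w (x + ε • z)) ρ) :
    Integrable (fun z ↦ C + ⟪p, x + ε • z⟫ - w (x + ε • z)) ρ ∧
      ∫ z, (C + ⟪p, x + ε • z⟫ - w (x + ε • z)) ∂ρ
        = C + ⟪p, x⟫ - ∫ z, w (x + ε • z) ∂ρ := by
  have := h.isProbabilityMeasure
  have hlin := (h.integrable_inner p).const_mul ε
  have haff : Integrable (fun z ↦ C + ⟪p, x⟫ + ε * ⟪p, z⟫) ρ := (integrable_const _).add hlin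
  simp only [inner_add_right, real_inner_smul_right, ← add_assoc]
  refine ⟨haff.sub hw, ?_⟩
  rw [integral_sub haff hw, integral_add (integrable_const _) hlin, integral_const_mul,
    h.integral_inner_eq_zero]
  simp

lemma IsStepLaw.integrable_barrier (h : IsStepLaw Λ β ρ) {l : ℝ} (hl : 0 ≤ l) (R ε : ℝ) (x : E) :
    Integrable (fun z ↦ barrier l R (x + ε • z)) ρ := by
  have := h.isProbabilityMeasure
  exact ((h.integrable_gaussian hl ε x).sub (integrable_const _)).div_const 2

lemma IsStepLaw.integral_barrier (h : IsStepLaw Λ β ρ) {l : ℝ} (hl : 0 ≤ l) (R ε : ℝ) (x : E) :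
    ∫ z, barrier l R (x + ε • z) ∂ρ
      = ((∫ z, Real.exp (-l * ‖x + ε • z‖ ^ 2) ∂ρ) - Real.exp (-l * (4 * R) ^ 2)) / 2 := by
  have := h.isProbabilityMeasure
  simp only [barrier]
  rw [integral_div, integral_sub (h.integrable_gaussian hl ε x) (integrable_const _)]
  simp

variable {l ε : ℝ}

lemma IsStepLaw.barrier_sub_integral_le (h : IsStepLaw Λ β ρ) (hβ : 0 ≤ β) (hl : 0 ≤ l)
    (hlβ : l * (β * ((1 / 4) ^ finrank ℝ E / 16)) = 32 * Λ ^ 2) (ht : l * ε ^ 2 * Λ ^ 2 ≤ 1 / 2)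
    (R : ℝ) (x : E) :
    barrier l R x - ∫ z, barrier l R (x + ε • z) ∂ρ ≤ l * ε ^ 2 * Λ ^ 2 / 2 := by
  rw [h.integral_barrier hl, barrier]
  have hdrift := h.one_sub_mul_gaussian_le hβ hl hlβ ht x
  have hle := mul_le_of_le_one_right (by positivity : 0 ≤ l * ε ^ 2 * Λ ^ 2)
    (exp_neg_mul_sq_le_one hl ‖x‖)
  linarith

lemma IsStepLaw.barrier_sub_integral_le_neg (h : IsStepLaw Λ β ρ) (hβ : 0 ≤ β) (hl : 0 ≤ l)
    (hlβ : l * (β * ((1 / 4) ^ finrank ℝ E / 16)) = 32 * Λ ^ 2) (ht : l * ε ^ 2 * Λ ^ 2 ≤ 1 / 2)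
    {R : ℝ} {x : E} (hx : 1 / 4 ≤ ‖x‖) (hxR : ‖x‖ ≤ 4 * R) :
    barrier l R x - ∫ z, barrier l R (x + ε • z) ∂ρ
      ≤ -(l * ε ^ 2 * Λ ^ 2 * Real.exp (-l * (4 * R) ^ 2) / 2) := by
  rw [h.integral_barrier hl, barrier]
  have hdrift := h.one_add_mul_gaussian_le hβ hl hlβ ht hx
  have hle := mul_le_mul_of_nonneg_left (exp_neg_mul_sq_le hl (norm_nonneg x) hxR)
    (by positivity : 0 ≤ l * ε ^ 2 * Λ ^ 2)
  linarith

lemma IsStepLaw.gap_estimates (h : IsStepLaw Λ β ρ) (hβ : 0 < β) (hl : 0 ≤ l) (hε : 0 < ε)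
    (R : ℝ) {u : E → ℝ} (hu : Measurable u) {M : ℝ} (hM : ∀ y, |u y| ≤ M) {x : E}
    (hux : ∫ z, u (x + ε • z) ∂ρ ≤ u x) {C : ℝ} {p : E}
    (hgap : ∀ z, ‖z‖ ≤ Λ →
      0 ≤ C + ⟪p, x + ε • z⟫ - (barrier l R (x + ε • z) - u (x + ε • z))) :
    0 ≤ C + ⟪p, x⟫ + u x - ∫ z, barrier l R (x + ε • z) ∂ρ ∧
      ∫⁻ y in ball x ε, ENNReal.ofReal (C + ⟪p, y⟫ - (barrier l R y - u y))
        ≤ ENNReal.ofReal ((C + ⟪p, x⟫ + u x - ∫ z, barrier l R (x + ε • z) ∂ρ) / β)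
          * volume (ball x ε) := by
  have hbar := h.integrable_barrier hl R ε x
  have huint : Integrable (fun z ↦ u (x + ε • z)) ρ :=
    h.integrable_of_bound (by fun_prop) fun z _ ↦ hM _
  obtain ⟨hint, hval⟩ := h.integral_affine_sub ε C p x
    (w := fun y ↦ barrier l R y - u y) (hbar.sub huint)
  rw [integral_sub hbar huint] at hval
  have hle : ∫ z, (C + ⟪p, x + ε • z⟫ - (barrier l R (x + ε • z) - u (x + ε • z))) ∂ρ
      ≤ C + ⟪p, x⟫ + u x - ∫ z, barrier l R (x + ε • z) ∂ρ := by linarith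
  refine ⟨(integral_nonneg_of_ae ?_).trans hle, ?_⟩
  · filter_upwards [h.ae_norm_le] with z hz using hgap z hz
  · have := measurable_barrier (E := E) l R
    exact h.setLIntegral_ball_le hβ hε x (f := fun y ↦ C + ⟪p, y⟫ - (barrier l R y - u y))
      (by fun_prop) hint hgap hle

theorem exists_touchesFromAbove_barrier_sub {ρ : E → Measure E} (hρ : ∀ x, IsStepLaw Λ β (ρ x))
    (hΛ : 1 ≤ Λ) (hβ : 0 < β) (hl : 0 < l)
    (hlβ : l * (β * ((1 / 4) ^ finrank ℝ E / 16)) = 32 * Λ ^ 2) (hε : 0 < ε)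
    (ht : l * ε ^ 2 * Λ ^ 2 ≤ 1 / 2) (hεΛ : ε * Λ ≤ 1) {R : ℝ} (hR : 1 ≤ R) {u : E → ℝ}
    (hu : IsSupersolution ε ρ (ball 0 (5 * R)) u) {x₀ : E} (hx₀ : ‖x₀‖ ≤ 3 / 2 * R)
    (hux₀ : u x₀ < barrierLevel l R) {p : E} (hp : ‖p‖ ≤ barrierLevel l R / (26 * R)) :
    ∃ (x : E) (C : ℝ), ‖x‖ < 1 / 4 ∧
      TouchesFromAbove (fun y ↦ barrier l R y - u y) ε (l * ε ^ 2 * Λ ^ 2 / β) x p C ∧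
      ∀ y ∈ ball x ε, 1 ≤ u y → 1 / 4 ≤ C + ⟪p, y⟫ - (barrier l R y - u y) := by
  have hR0 : 0 < R := by linarith
  have hγ := barrierLevel_pos hl hR0
  have ht0 : 0 < l * ε ^ 2 * Λ ^ 2 := by positivity
  have hpD := fun y ↦ abs_inner_sub_le_of_norm_le (y := y) hγ.le hR0 hp hx₀
  -- Small enough for the near-maximum to exceed the boundary values of the barrier, and to be
  -- beaten by the drift of the barrier away from the ball of radius `1 / 4`.
  obtain ⟨η, hη, hηγ, hηt⟩ : ∃ η > 0, η ≤ barrierLevel l R / 4 ∧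
      η ≤ l * ε ^ 2 * Λ ^ 2 * Real.exp (-l * (4 * R) ^ 2) / 4 :=
    ⟨min _ _, lt_min (by positivity) (by positivity), min_le_left _ _, min_le_right _ _⟩
  obtain ⟨x, hxD, hmax⟩ := exists_nearMaximizer hl.le hR0 hu.nonneg p hη
  have hx4 := norm_lt_of_nearMaximizer hmax hl hR0 hu.nonneg hxD hx₀ hux₀ hηγ hpD
  have hball : ball x ε ⊆ ball 0 (5 * R) := ball_subset_ball' <| by
    rw [dist_zero_right]
    linarith [le_mul_of_one_le_right hε.le hΛ]
  obtain ⟨M, hM⟩ := hu.bounded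
  obtain ⟨hgap0, hgap⟩ := (hρ x).gap_estimates hβ hl.le hε R hu.measurable (M := M)
    (fun y ↦ by rw [abs_of_nonneg (hu.nonneg y)]; exact hM y) (hu.integral_le x hxD)
    (fun z hz ↦ gap_nonneg_of_nearMaximizer hmax (add_smul_mem_ball hR hε.le hεΛ hx4 hz))
  refine ⟨x, _, ?_, ⟨fun y hy ↦ ?_, hgap.trans ?_⟩, fun y hy huy ↦
    quarter_le_gap_of_nearMaximizer hmax hl.le hx₀ hR0 hux₀ (hpD y (hball hy)) huy⟩
  · by_contra! hfar
    linarith [(hρ x).barrier_sub_integral_le_neg hβ.le hl.le hlβ ht hfar hx4.le,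
      mul_pos ht0 (Real.exp_pos (-l * (4 * R) ^ 2))]
  · linarith [gap_nonneg_of_nearMaximizer hmax (hball hy)]
  · gcongr
    linarith [(hρ x).barrier_sub_integral_le hβ.le hl.le hlβ ht R x,
      mul_le_of_le_one_right ht0.le (exp_neg_mul_sq_le_one hl.le (4 * R))]

end Contact

section Grid

lemma measure_eq_tsum_inter_preimage {α κ : Type*} [MeasurableSpace α] [MeasurableSpace κ]
    [MeasurableSingletonClass κ] [Countable κ] (μ : Measure α) {f : α → κ} (hf : Measurable f)
    (s : Set α) : μ s = ∑' k, μ (s ∩ f ⁻¹' {k}) := by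
  have hfib (k : κ) : MeasurableSet (f ⁻¹' {k}) := hf (measurableSet_singleton k)
  calc μ s = μ.restrict s (⋃ k, f ⁻¹' {k}) := by
        rw [← Set.preimage_iUnion, Set.iUnion_of_singleton, Set.preimage_univ,
          Measure.restrict_apply_univ]
    _ = ∑' k, μ.restrict s (f ⁻¹' {k}) := measure_iUnion
        (fun i j hij ↦ Disjoint.preimage f (Set.disjoint_singleton.2 hij)) hfib
    _ = ∑' k, μ (s ∩ f ⁻¹' {k}) := by
        simp only [Measure.restrict_apply (hfib _), Set.inter_comm]

lemma measure_le_tsum_inter_preimage {α κ : Type*} [MeasurableSpace α] [Countable κ]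
    (μ : Measure α) (f : α → κ) (s : Set α) : μ s ≤ ∑' k, μ (s ∩ f ⁻¹' {k}) := by
  refine le_of_eq_of_le (congrArg μ ?_) (measure_iUnion_le fun k ↦ s ∩ f ⁻¹' {k})
  rw [← Set.inter_iUnion, ← Set.preimage_iUnion, Set.iUnion_of_singleton, Set.preimage_univ,
    Set.inter_univ]

variable {ι : Type*}

/-- The index of the cell containing `x` in the grid of half-open cubes of side `h`; the grid is
shifted so that the unit cube centered at the origin is a cell of the grid of side `1`. -/
def gridIndex (h : ℝ) (x : EuclideanSpace ℝ ι) : ι → ℤ := fun i ↦ ⌊(x i + 1 / 2) / h⌋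

lemma measurable_gridIndex (h : ℝ) :
    Measurable (gridIndex h : EuclideanSpace ℝ ι → ι → ℤ) :=
  measurable_pi_lambda _ fun _ ↦ Int.measurable_floor.comp (by fun_prop)

variable [Fintype ι]

lemma norm_le_sqrt_card_mul {x : EuclideanSpace ℝ ι} {r : ℝ} (hr : 0 ≤ r) (h : ∀ i, |x i| ≤ r) :
    ‖x‖ ≤ √(Fintype.card ι) * r := by
  rw [EuclideanSpace.norm_eq, Real.sqrt_le_iff, mul_pow, Real.sq_sqrt (by positivity)]
  refine ⟨by positivity, ?_⟩
  calc ∑ i, ‖x i‖ ^ 2 ≤ ∑ _i : ι, r ^ 2 := by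
        gcongr with i
        exact h i
    _ = Fintype.card ι * r ^ 2 := by simp

lemma norm_sub_le_of_gridIndex_eq {h : ℝ} (hh : 0 < h) {x y : EuclideanSpace ℝ ι}
    (hxy : gridIndex h x = gridIndex h y) : ‖x - y‖ ≤ √(Fintype.card ι) * h := by
  refine norm_le_sqrt_card_mul hh.le fun i ↦ ?_
  have hlt := Int.abs_sub_lt_one_of_floor_eq_floor (congrFun hxy i)
  rw [← sub_div, abs_div, abs_of_pos hh, div_lt_one hh] at hlt
  simpa using hlt.le

lemma volume_gridIndex_preimage_singleton {h : ℝ} (hh : 0 < h) (k : ι → ℤ) :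
    volume (gridIndex h ⁻¹' {k} : Set (EuclideanSpace ℝ ι))
      = ENNReal.ofReal (h ^ Fintype.card ι) := by
  have hpre : (gridIndex h ⁻¹' {k} : Set (EuclideanSpace ℝ ι)) =
      (MeasurableEquiv.toLp 2 (ι → ℝ)).symm ⁻¹'
        (Set.univ.pi fun i ↦ Set.Ico (k i * h - 1 / 2) ((k i + 1) * h - 1 / 2)) := by
    ext x
    simp only [Set.mem_preimage, Set.mem_singleton_iff, Set.mem_univ_pi, Set.mem_Ico, funext_iff,
      gridIndex, Int.floor_eq_iff, le_div_iff₀ hh, div_lt_iff₀ hh, sub_le_iff_le_add,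
      lt_sub_iff_add_lt]
    rfl
  have hside (i : ι) : ((k i : ℝ) + 1) * h - 1 / 2 - (k i * h - 1 / 2) = h := by ring
  rw [hpre, (EuclideanSpace.volume_preserving_symm_measurableEquiv_toLp ι).measure_preimage_equiv,
    Real.volume_pi_Ico]
  simp only [hside, Finset.prod_const, Finset.card_univ, ENNReal.ofReal_pow hh.le]

end Grid

section DiscreteABP

section

variable {E : Type*} [NormedAddCommGroup E] [InnerProductSpace ℝ E] [MeasurableSpace E]
  [BorelSpace E] [FiniteDimensional ℝ E] {w : E → ℝ} {ε J C : ℝ} {x p : E} {S T : Set E}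

lemma TouchesFromAbove.ofReal_mul_volume_le (h : TouchesFromAbove w ε J x p C) {a : ℝ}
    (hT : MeasurableSet T) (hTx : T ⊆ ball x ε) (ha : ∀ y ∈ T, a ≤ C + ⟪p, y⟫ - w y) :
    ENNReal.ofReal a * volume T ≤ ENNReal.ofReal J * volume (ball x ε) := by
  rw [← setLIntegral_const]
  exact (setLIntegral_mono' hT fun y hy ↦ ENNReal.ofReal_le_ofReal (ha y hy)).trans
    ((lintegral_mono_set hTx).trans h.setLIntegral_gap_le)

lemma TouchesFromAbove.volume_le_two_mul_volume_sdiff (h : TouchesFromAbove w ε J x p C)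
    (hS : MeasurableSet S) (hT : MeasurableSet T) (hTx : T ⊆ ball x ε)
    (hgap : ∀ y ∈ ball x ε, y ∈ S → 1 / 4 ≤ C + ⟪p, y⟫ - w y)
    (hJ : ENNReal.ofReal (8 * J) * volume (ball x ε) ≤ volume T) :
    volume T ≤ 2 * volume (T \ S) := by
  have hTtop : volume T ≠ ∞ := measure_ne_top_of_subset hTx measure_ball_lt_top.ne
  have h8 : 8 * ENNReal.ofReal (1 / 4) = 2 := by
    rw [← ENNReal.ofReal_ofNat 8, ← ENNReal.ofReal_mul (by norm_num), ← ENNReal.ofReal_ofNat 2]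
    norm_num
  have hhalf : 2 * volume (T ∩ S) ≤ volume T :=
    calc 2 * volume (T ∩ S) = 8 * (ENNReal.ofReal (1 / 4) * volume (T ∩ S)) := by
          rw [← mul_assoc, h8]
      _ ≤ 8 * (ENNReal.ofReal J * volume (ball x ε)) := by
          refine mul_le_mul_right ?_ _
          exact h.ofReal_mul_volume_le (hT.inter hS) (Set.inter_subset_left.trans hTx)
            fun y hy ↦ hgap y (hTx hy.1) hy.2
      _ = ENNReal.ofReal (8 * J) * volume (ball x ε) := by
          rw [ENNReal.ofReal_mul (by norm_num), ENNReal.ofReal_ofNat, mul_assoc]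
      _ ≤ volume T := hJ
  refine (ENNReal.add_le_add_iff_left hTtop).1 ?_
  calc volume T + volume T = 2 * volume (T ∩ S) + 2 * volume (T \ S) := by
        rw [← mul_add, measure_inter_add_sdiff T hS, two_mul]
    _ ≤ volume T + 2 * volume (T \ S) := by gcongr

end

variable {ι : Type*} [Fintype ι] {w : EuclideanSpace ℝ ι → ℝ} {ε h J a : ℝ}
  {X : EuclideanSpace ℝ ι → EuclideanSpace ℝ ι} {C : EuclideanSpace ℝ ι → ℝ}
  {P S : Set (EuclideanSpace ℝ ι)}

lemma gridIndex_preimage_subset_ball (hh : 0 < h) {r : ℝ} (hr : √(Fintype.card ι) * h < r)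
    (x : EuclideanSpace ℝ ι) : gridIndex h ⁻¹' {gridIndex h x} ⊆ ball x r := fun _ hy ↦
  mem_ball_iff_norm.2 <| (norm_sub_le_of_gridIndex_eq hh hy).trans_lt hr

lemma volume_inter_gridIndex_contact_le (hw : Measurable w) (hε : 0 < ε) (hJ : 0 < J) (hh : 0 < h)
    (hhε : √(Fintype.card ι) * h < ε / 2) (hX : ∀ p ∈ P, TouchesFromAbove w ε J (X p) p (C p))
    (k : ι → ℤ) : volume (P ∩ (gridIndex h ∘ X) ⁻¹' {k})
      ≤ volume (ball (0 : EuclideanSpace ℝ ι) (17 * 8 ^ Fintype.card ι * J / ε)) := by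
  obtain hempty | ⟨q, hqP, hqk⟩ := (P ∩ (gridIndex h ∘ X) ⁻¹' {k}).eq_empty_or_nonempty
  · simp [hempty]
  rw [← Measure.addHaar_ball_center volume q]
  refine measure_mono fun p ⟨hpP, hpk⟩ ↦ mem_ball_iff_norm.2 ?_
  have hdist : dist (X p) (X q) < ε / 2 := (dist_eq_norm _ _).trans_lt <|
    (norm_sub_le_of_gridIndex_eq hh (hpk.trans hqk.symm)).trans_lt hhε
  have hle := (hX p hpP).norm_sub_le hw hε hJ.le (hX q hqP) hdist
  rw [finrank_euclideanSpace] at hle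
  calc ‖p - q‖ ≤ 16 * 8 ^ Fintype.card ι * J / ε := hle
    _ < 17 * 8 ^ Fintype.card ι * J / ε := by gcongr; norm_num

lemma volume_inter_gridIndex_contact_le_mul (hw : Measurable w) (hS : MeasurableSet S) (hε : 0 < ε)
    (hε' : ε ≤ 1 / 4) (hJ : 0 < J) (hh : 0 < h) (hhε : √(Fintype.card ι) * h < ε / 2)
    (hsmall : ENNReal.ofReal (8 * J) * volume (ball (0 : EuclideanSpace ℝ ι) ε)
      ≤ ENNReal.ofReal (h ^ Fintype.card ι))
    (hX : ∀ p ∈ P, ‖X p‖ < 1 / 4 ∧ TouchesFromAbove w ε J (X p) p (C p) ∧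
      ∀ y ∈ ball (X p) ε, y ∈ S → 1 / 4 ≤ C p + ⟪p, y⟫ - w y) (k : ι → ℤ) :
    volume (P ∩ (gridIndex h ∘ X) ⁻¹' {k})
      ≤ 2 * volume (ball (0 : EuclideanSpace ℝ ι) (17 * 8 ^ Fintype.card ι * J / ε / h)) *
        volume ((ball 0 (1 / 2) \ S) ∩ gridIndex h ⁻¹' {k}) := by
  obtain hempty | ⟨q, hqP, rfl⟩ := (P ∩ (gridIndex h ∘ X) ⁻¹' {k}).eq_empty_or_nonempty
  · simp [hempty]
  set T : Set (EuclideanSpace ℝ ι) := gridIndex h ⁻¹' {gridIndex h (X q)}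
  obtain ⟨hXq, htouch, hgap⟩ := hX q hqP
  have hTx : T ⊆ ball (X q) ε := gridIndex_preimage_subset_ball hh (by linarith) (X q)
  have hThalf : T ⊆ ball 0 (1 / 2) :=
    hTx.trans (ball_subset_ball' (by rw [dist_zero_right]; linarith))
  have hTvol : volume T = ENNReal.ofReal (h ^ Fintype.card ι) :=
    volume_gridIndex_preimage_singleton hh _
  have hT : volume T ≤ 2 * volume (T \ S) := by
    refine htouch.volume_le_two_mul_volume_sdiff hS
      (measurable_gridIndex h (measurableSet_singleton _)) hTx hgap ?_
    rwa [Measure.addHaar_ball_center, hTvol]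
  calc volume (P ∩ (gridIndex h ∘ X) ⁻¹' {gridIndex h (X q)})
      ≤ volume (ball (0 : EuclideanSpace ℝ ι) (17 * 8 ^ Fintype.card ι * J / ε)) :=
        volume_inter_gridIndex_contact_le hw hε hJ hh hhε (fun p hp ↦ (hX p hp).2.1) _
    _ = volume (ball (0 : EuclideanSpace ℝ ι) (17 * 8 ^ Fintype.card ι * J / ε / h)) *
          volume T := by
        have hscale := Measure.addHaar_ball_mul_of_pos volume (0 : EuclideanSpace ℝ ι) hh
          (17 * 8 ^ Fintype.card ι * J / ε / h)
        rwa [mul_div_cancel₀ _ hh.ne', finrank_euclideanSpace, ← hTvol, mul_comm (volume T)]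
          at hscale
    _ ≤ volume (ball (0 : EuclideanSpace ℝ ι) (17 * 8 ^ Fintype.card ι * J / ε / h)) *
          (2 * volume (T \ S)) := by gcongr
    _ = _ := by
        have hcell : (ball 0 (1 / 2) \ S) ∩ T = T \ S := by
          rw [← Set.inter_sdiff_right_comm, Set.inter_eq_self_of_subset_right hThalf]
        rw [mul_left_comm, ← mul_assoc, ← hcell]
        rfl

/-- The ratio of the radius of a ball containing the slopes of all contact points in one cell of the
grid of side `ε / (4 √d)` to that side, when the mean gaps are at most `a ε²`. -/
def slopeConst (ι : Type*) [Fintype ι] (a : ℝ) : ℝ :=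
  17 * 8 ^ Fintype.card ι * a * (4 * √(Fintype.card ι))

lemma slopeConst_pos [Nonempty ι] (ha : 0 < a) : 0 < slopeConst ι a := by
  have : 0 < √(Fintype.card ι : ℝ) := by simp [Fintype.card_pos]
  unfold slopeConst
  positivity

theorem volume_ball_le_of_forall_exists_touchesFromAbove [Nonempty ι] (hw : Measurable w)
    (hS : MeasurableSet S) (hε : 0 < ε) (hε' : ε ≤ 1 / 4) (ha : 0 < a)
    (hsmall : 8 * (a * ε ^ 2) * (volume.real (ball (0 : EuclideanSpace ℝ ι) 1) *
      (4 * √(Fintype.card ι)) ^ Fintype.card ι) ≤ 1)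
    (hcontact : ∀ p ∈ P, ∃ x C, ‖x‖ < 1 / 4 ∧ TouchesFromAbove w ε (a * ε ^ 2) x p C ∧
      ∀ y ∈ ball x ε, y ∈ S → 1 / 4 ≤ C + ⟪p, y⟫ - w y) :
    volume P ≤ 2 * volume (ball (0 : EuclideanSpace ℝ ι) (slopeConst ι a)) *
      volume (ball 0 (1 / 2) \ S) := by
  choose! X C hX using hcontact
  have : 0 < √(Fintype.card ι : ℝ) := by simp [Fintype.card_pos]
  set h := ε / (4 * √(Fintype.card ι)) with hdef
  have hh : 0 < h := by positivity
  have hhε : √(Fintype.card ι) * h < ε / 2 := by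
    have : √(Fintype.card ι) * h = ε / 4 := by rw [hdef]; field_simp
    linarith
  have hsmall' : ENNReal.ofReal (8 * (a * ε ^ 2)) * volume (ball (0 : EuclideanSpace ℝ ι) ε)
      ≤ ENNReal.ofReal (h ^ Fintype.card ι) := by
    rw [Measure.addHaar_ball _ _ hε.le, finrank_euclideanSpace,
      ← ofReal_measureReal measure_ball_lt_top.ne, ← ENNReal.ofReal_mul (by positivity),
      ← ENNReal.ofReal_mul (by positivity)]
    refine ENNReal.ofReal_le_ofReal ?_
    rw [hdef, div_pow, le_div_iff₀ (by positivity)]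
    linear_combination ε ^ Fintype.card ι * hsmall
  have hconst : 17 * 8 ^ Fintype.card ι * (a * ε ^ 2) / ε / h = slopeConst ι a := by
    rw [slopeConst, hdef]; field_simp
  calc volume P ≤ ∑' k, volume (P ∩ (gridIndex h ∘ X) ⁻¹' {k}) :=
        measure_le_tsum_inter_preimage _ _ _
    _ ≤ ∑' k, 2 * volume (ball (0 : EuclideanSpace ℝ ι) (slopeConst ι a)) *
          volume ((ball 0 (1 / 2) \ S) ∩ gridIndex h ⁻¹' {k}) := by
        rw [← hconst]
        exact ENNReal.tsum_le_tsum <| volume_inter_gridIndex_contact_le_mul hw hS hε hε'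
          (by positivity) hh hhε hsmall' hX
    _ = _ := by
        rw [ENNReal.tsum_mul_left, ← measure_eq_tsum_inter_preimage _ (measurable_gridIndex h)]

end DiscreteABP

section MeasureToPoint

/-- The point estimate: a nonnegative supersolution on the ball of radius `5 R`, for a step size
less than `ε₁`, that is at least `1` on all of the ball of radius `1 / 2` but a set of volume at
most `δ`, is at least `γ` on the ball of radius `3 R / 2`. -/
def PointEstimate (E : Type*) [NormedAddCommGroup E] [InnerProductSpace ℝ E]
    [FiniteDimensional ℝ E] [MeasurableSpace E] [BorelSpace E] (Λ β R ε₁ δ γ : ℝ) : Prop :=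
  ∀ ⦃ε : ℝ⦄, ε ∈ Set.Ioo 0 ε₁ → ∀ ⦃ρ : E → Measure E⦄, (∀ x, IsStepLaw Λ β (ρ x)) →
    ∀ ⦃u : E → ℝ⦄, IsSupersolution ε ρ (ball 0 (5 * R)) u →
    volume (ball 0 (1 / 2) \ {y | 1 ≤ u y}) ≤ ENNReal.ofReal δ →
    ∀ ⦃x : E⦄, ‖x‖ ≤ 3 / 2 * R → γ ≤ u x

open Filter Topology in
lemma eventually_mul_le_nhdsGT_zero {f : ℝ → ℝ} (hf : Continuous f) (h0 : f 0 = 0) {b : ℝ}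
    (hb : 0 < b) : ∀ᶠ ε in 𝓝[>] 0, f ε ≤ b :=
  ((hf.tendsto' 0 0 h0).mono_left nhdsWithin_le_nhds).eventually_le_const hb

lemma pow_finrank_le_of_volume_ball_le {E : Type*} [NormedAddCommGroup E] [InnerProductSpace ℝ E]
    [FiniteDimensional ℝ E] [MeasurableSpace E] [BorelSpace E] {r s δ : ℝ} (hr : 0 < r)
    (hs : 0 < s) (h : volume (ball (0 : E) r) ≤ 2 * volume (ball (0 : E) s) * ENNReal.ofReal δ) :
    r ^ finrank ℝ E ≤ 2 * s ^ finrank ℝ E * δ := by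
  have hω : volume (ball (0 : E) 1) ≠ 0 := (measure_ball_pos _ _ one_pos).ne'
  rw [Measure.addHaar_ball_of_pos _ _ hr, Measure.addHaar_ball_of_pos _ _ hs, ← mul_assoc,
    mul_right_comm, ENNReal.mul_le_mul_iff_left hω measure_ball_lt_top.ne,
    ← ENNReal.ofReal_ofNat 2, ← ENNReal.ofReal_mul (by positivity),
    ← ENNReal.ofReal_mul (by positivity)] at h
  exact (ENNReal.ofReal_le_ofReal_iff' .. |>.1 h).resolve_right (by positivity : 0 < r ^ _).not_ge

open Filter Topology in
theorem exists_pointEstimate (ι : Type*) [Fintype ι] [Nonempty ι] {Λ β R : ℝ} (hΛ : 1 ≤ Λ)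
    (hβ : 0 < β) (hR : 1 ≤ R) : ∃ ε₁ δ γ : ℝ, 0 < ε₁ ∧ δ ∈ Set.Ioo 0 1 ∧ γ ∈ Set.Ioc 0 1 ∧
      PointEstimate (EuclideanSpace ℝ ι) Λ β R ε₁ δ γ := by
  set l : ℝ := 32 * Λ ^ 2 / (β * ((1 / 4) ^ Fintype.card ι / 16))
  have hl : 0 < l := by positivity
  have hlβ : l * (β * ((1 / 4) ^ Fintype.card ι / 16)) = 32 * Λ ^ 2 :=
    div_mul_cancel₀ _ (by positivity)
  have hγ : 0 < barrierLevel l R := barrierLevel_pos hl (by linarith)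
  set a := l * Λ ^ 2 / β
  set P₀ := barrierLevel l R / (26 * R)
  have hP₀ : 0 < P₀ := by positivity
  have hslope : 0 < slopeConst ι a := slopeConst_pos (by positivity)
  obtain ⟨δ, hδ0, hδ⟩ : ∃ δ, 0 < δ ∧
      δ < min 1 (P₀ ^ Fintype.card ι / (2 * slopeConst ι a ^ Fintype.card ι)) :=
    exists_between (by positivity)
  obtain ⟨hδ1, hδP⟩ := lt_min_iff.1 hδ
  have hsmall : ∀ᶠ ε : ℝ in 𝓝[>] 0, ε ≤ 1 / 4 ∧ ε * Λ ≤ 1 ∧ l * ε ^ 2 * Λ ^ 2 ≤ 1 / 2 ∧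
      8 * (a * ε ^ 2) * (volume.real (ball (0 : EuclideanSpace ℝ ι) 1) *
        (4 * √(Fintype.card ι)) ^ Fintype.card ι) ≤ 1 := by
    refine .and ?_ (.and ?_ (.and ?_ ?_)) <;>
      exact eventually_mul_le_nhdsGT_zero (by fun_prop) (by simp) (by norm_num)
  obtain ⟨ε₁, hε₁, hsub⟩ := mem_nhdsGT_iff_exists_Ioo_subset.1 hsmall
  refine ⟨ε₁, δ, barrierLevel l R, hε₁, ⟨hδ0, hδ1⟩,
    ⟨hγ, (barrierLevel_le_quarter hl.le).trans (by norm_num)⟩, fun ε hε ρ hρ u hu hvol x₀ hx₀ ↦ ?_⟩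
  obtain ⟨hε4, hεΛ, ht, hω⟩ := hsub hε
  by_contra! hux₀
  have hcontact : ∀ p ∈ ball (0 : EuclideanSpace ℝ ι) P₀, ∃ x C, ‖x‖ < 1 / 4 ∧
      TouchesFromAbove (fun y ↦ barrier l R y - u y) ε (a * ε ^ 2) x p C ∧
      ∀ y ∈ ball x ε, 1 ≤ u y → 1 / 4 ≤ C + ⟪p, y⟫ - (barrier l R y - u y) := fun p hp ↦ by
    rw [show a * ε ^ 2 = l * ε ^ 2 * Λ ^ 2 / β by ring]
    exact exists_touchesFromAbove_barrier_sub hρ hΛ hβ hl (by rwa [finrank_euclideanSpace]) hε.1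
      ht hεΛ hR hu hx₀ hux₀ (mem_ball_zero_iff.1 hp).le
  have hvolP := (volume_ball_le_of_forall_exists_touchesFromAbove (S := {y | 1 ≤ u y})
    ((measurable_barrier l R).sub hu.measurable) (measurableSet_le measurable_const hu.measurable)
    hε.1 hε4 (by positivity) hω hcontact).trans (mul_le_mul_right hvol _)
  have hle := pow_finrank_le_of_volume_ball_le hP₀ hslope hvolP
  rw [finrank_euclideanSpace, ← div_le_iff₀' (by positivity)] at hle
  exact hδP.not_ge hle

variable {E : Type*} [NormedAddCommGroup E] [InnerProductSpace ℝ E] {s : ℝ} {c : E}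

lemma add_smul_mem_ball_mul (hs : 0 < s) {y : E} {r : ℝ} :
    c + s • y ∈ ball c (r * s) ↔ y ∈ ball 0 r := by
  rw [mem_ball_iff_norm, add_sub_cancel_left, norm_smul, Real.norm_of_nonneg hs.le, mul_comm,
    mul_lt_mul_iff_left₀ hs, mem_ball_zero_iff]

variable [MeasurableSpace E] [BorelSpace E] {ε Λ β R ε₁ δ γ κ : ℝ}
  {ρ : E → Measure E} {u : E → ℝ}

lemma IsSupersolution.comp_add_smul (hu : IsSupersolution ε ρ (ball c (R * s)) u) (hs : 0 < s)
    (hκ : 0 < κ) : IsSupersolution (ε / s) (fun y ↦ ρ (c + s • y)) (ball 0 R)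
      (fun y ↦ u (c + s • y) / κ) where
  measurable := (hu.measurable.comp (by fun_prop)).div_const κ
  nonneg y := div_nonneg (hu.nonneg _) hκ.le
  bounded := by
    obtain ⟨M, hM⟩ := hu.bounded
    exact ⟨M / κ, fun y ↦ by gcongr; exact hM _⟩
  integral_le y hy := by
    have hstep (z : E) : c + s • (y + (ε / s) • z) = c + s • y + ε • z := by
      rw [smul_add, smul_smul, mul_div_cancel₀ _ hs.ne', add_assoc]
    simp only [hstep, integral_div]
    gcongr
    exact hu.integral_le _ ((add_smul_mem_ball_mul hs).2 hy)

theorem PointEstimate.le_of_volume_sdiff_le [FiniteDimensional ℝ E]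
    (h : PointEstimate E Λ β R ε₁ δ γ) (hs : 0 < s)
    (hε : ε ∈ Set.Ioo 0 (ε₁ * s)) (hρ : ∀ x, IsStepLaw Λ β (ρ x)) (hκ : 0 < κ)
    (hu : IsSupersolution ε ρ (ball c (5 * R * s)) u)
    (hvol : volume (ball c (s / 2) \ {y | κ ≤ u y}) ≤ ENNReal.ofReal (δ * s ^ finrank ℝ E))
    {x : E} (hx : ‖x - c‖ ≤ 3 / 2 * R * s) : γ * κ ≤ u x := by
  have hpre : ball (0 : E) (1 / 2) \ {y | 1 ≤ u (c + s • y) / κ}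
      = (fun z ↦ c + s • z) ⁻¹' (ball c (s / 2) \ {y | κ ≤ u y}) := by
    ext y
    simp only [Set.mem_sdiff, Set.mem_ofPred_eq, Set.mem_preimage, one_le_div hκ,
      ← add_smul_mem_ball_mul (c := c) hs, one_div_mul_eq_div]
  have hvol' : volume (ball (0 : E) (1 / 2) \ {y | 1 ≤ u (c + s • y) / κ})
      ≤ ENNReal.ofReal δ := by
    rw [hpre, volume_preimage_add_smul hs]
    calc ENNReal.ofReal (s ^ finrank ℝ E)⁻¹ * volume (ball c (s / 2) \ {y | κ ≤ u y})
        ≤ ENNReal.ofReal (s ^ finrank ℝ E)⁻¹ * ENNReal.ofReal (δ * s ^ finrank ℝ E) := by gcongr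
      _ = ENNReal.ofReal δ := by
          rw [← ENNReal.ofReal_mul (by positivity), mul_comm δ,
            inv_mul_cancel_left₀ (by positivity)]
  have hx' : ‖s⁻¹ • (x - c)‖ ≤ 3 / 2 * R := by
    rwa [norm_smul, Real.norm_of_nonneg (by positivity), inv_mul_le_iff₀' hs]
  have hle := h ⟨div_pos hε.1 hs, (div_lt_iff₀ hs).2 hε.2⟩ (fun y ↦ hρ _)
    (hu.comp_add_smul hs hκ) hvol' hx'
  rwa [smul_inv_smul₀ hs.ne', add_sub_cancel, le_div_iff₀ hκ] at hle

end MeasureToPoint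

section RefiningPartitions

variable {α κ : Type*} {p : ℕ → α → κ} {j l : ℕ} {x y : α} {S T : Set α}

/-- The class of `x` in the `j`-th partition of a sequence of partitions of `α`; partitions are
encoded by the functions `p j` mapping a point to the label of its class. -/
def atom (p : ℕ → α → κ) (j : ℕ) (x : α) : Set α := p j ⁻¹' {p j x}

/-- Unions of classes of the `l`-th partition. -/
def IsSaturated (p : ℕ → α → κ) (l : ℕ) (S : Set α) : Prop :=
  ∀ ⦃x y⦄, p l x = p l y → x ∈ S → y ∈ S

/-- The union of the classes of the `l`-th partition that meet `S`. -/
def saturation (p : ℕ → α → κ) (l : ℕ) (S : Set α) : Set α := {x | ∃ y ∈ S, p l y = p l x}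

lemma isSaturated_saturation : IsSaturated p l (saturation p l S) :=
  fun _ _ hxy ⟨z, hz, hzx⟩ ↦ ⟨z, hz, hzx.trans hxy⟩

lemma subset_saturation : S ⊆ saturation p l S := fun x hx ↦ ⟨x, hx, rfl⟩

lemma IsSaturated.inter (hS : IsSaturated p l S) (hT : IsSaturated p l T) :
    IsSaturated p l (S ∩ T) := fun _ _ hxy hx ↦ ⟨hS hxy hx.1, hT hxy hx.2⟩

lemma IsSaturated.atom_subset (hS : IsSaturated p l S) (hx : x ∈ S) : atom p l x ⊆ S :=
  fun _ hy ↦ hS (Set.mem_singleton_iff.1 hy).symm hx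

variable [MeasurableSpace α] [MeasurableSpace κ]

/-- A sequence of measurable partitions, each refining the previous one. -/
structure IsRefining (p : ℕ → α → κ) : Prop where
  measurable (j : ℕ) : Measurable (p j)
  eq_of_succ_eq {j : ℕ} {x y : α} : p (j + 1) x = p (j + 1) y → p j x = p j y

lemma IsRefining.eq_of_le (hp : IsRefining p) (hjl : j ≤ l) (h : p l x = p l y) :
    p j x = p j y := by
  induction hjl with
  | refl => exact h
  | step _ ih => exact ih (hp.eq_of_succ_eq h)

lemma IsRefining.isSaturated_mono (hp : IsRefining p) (hjl : j ≤ l) (hS : IsSaturated p j S) :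
    IsSaturated p l S := fun _ _ hxy ↦ hS (hp.eq_of_le hjl hxy)

/-- The union of the classes of the partitions before the `l`-th one that have a child in which the
relative measure of `S` exceeds `q`. -/
def denseParents (μ : Measure α) (p : ℕ → α → κ) (q : ℝ≥0∞) (l : ℕ) (S : Set α) : Set α :=
  {x | ∃ j < l, ∃ y, p j y = p j x ∧ q * μ (atom p (j + 1) y) < μ (S ∩ atom p (j + 1) y)}

variable {μ : Measure α} {q : ℝ≥0∞}

lemma IsRefining.isSaturated_denseParents (hp : IsRefining p) :
    IsSaturated p l (denseParents μ p q l S) := fun _ _ hxy ⟨j, hjl, z, hzx, hz⟩ ↦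
  ⟨j, hjl, z, hzx.trans (hp.eq_of_le hjl.le hxy), hz⟩

variable [DiscreteMeasurableSpace κ]

lemma IsRefining.measurableSet_atom (hp : IsRefining p) : MeasurableSet (atom p j x) :=
  hp.measurable j .of_discrete

lemma IsRefining.measurableSet_of_isSaturated (hp : IsRefining p) (hS : IsSaturated p l S) :
    MeasurableSet S := by
  have hpre : S = p l ⁻¹' (p l '' S) :=
    Set.Subset.antisymm (Set.subset_preimage_image _ _) fun _ ⟨_, hy, hyx⟩ ↦ hS hyx hy
  rw [hpre]
  exact hp.measurable l .of_discrete

lemma IsRefining.measure_inter_atom_le_of_succ [Countable κ] (hp : IsRefining p)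
    (h : ∀ y ∈ atom p j x, μ (S ∩ atom p (j + 1) y) ≤ q * μ (T ∩ atom p (j + 1) y)) :
    μ (S ∩ atom p j x) ≤ q * μ (T ∩ atom p j x) := by
  rw [measure_eq_tsum_inter_preimage μ (hp.measurable (j + 1)),
    measure_eq_tsum_inter_preimage μ (hp.measurable (j + 1)) (T ∩ _), ← ENNReal.tsum_mul_left]
  refine ENNReal.tsum_le_tsum fun k ↦ ?_
  obtain hempty | ⟨y, hyx, rfl⟩ := (atom p j x ∩ p (j + 1) ⁻¹' {k}).eq_empty_or_nonempty
  · simp [Set.inter_assoc, hempty]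
  have hsub : atom p (j + 1) y ⊆ atom p j x := fun z hz ↦ (hp.eq_of_succ_eq hz).trans hyx
  change μ (S ∩ atom p j x ∩ atom p (j + 1) y) ≤ q * μ (T ∩ atom p j x ∩ atom p (j + 1) y)
  simpa only [Set.inter_assoc, Set.inter_eq_self_of_subset_right hsub] using h y hyx

theorem IsRefining.measure_inter_atom_le_denseParents [Countable κ] (hp : IsRefining p)
    (hq : q < 1) (hfin : ∀ x, μ (atom p l x) ≠ ∞) (hS : IsSaturated p l S) (hjl : j ≤ l) :
    ∀ x, μ (S ∩ atom p j x) ≤ q * μ (atom p j x) →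
      μ (S ∩ atom p j x) ≤ q * μ (denseParents μ p q l S ∩ atom p j x) := by
  induction hjl using Nat.decreasingInduction with
  | self =>
    intro x hx
    obtain hempty | ⟨y, hyS, hyx⟩ := (S ∩ atom p l x).eq_empty_or_nonempty
    · simp [hempty]
    have hsub : atom p l x ⊆ S := hS.atom_subset (hS hyx hyS)
    rw [Set.inter_eq_self_of_subset_right hsub] at hx ⊢
    have hzero : μ (atom p l x) = 0 := by
      by_contra h0
      exact hx.not_gt (by simpa using ENNReal.mul_lt_mul_left h0 (hfin x) hq)
    simp [hzero]
  | of_succ j hjl ih =>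
    intro x hx
    by_cases hdense : ∃ y ∈ atom p j x, q * μ (atom p (j + 1) y) < μ (S ∩ atom p (j + 1) y)
    · obtain ⟨y, hyx, hy⟩ := hdense
      have hsub : atom p j x ⊆ denseParents μ p q l S :=
        fun z hz ↦ ⟨j, hjl, y, hyx.trans hz.symm, hy⟩
      rwa [Set.inter_eq_self_of_subset_right hsub]
    · push Not at hdense
      exact hp.measure_inter_atom_le_of_succ fun y hy ↦ ih y (hdense y hy)

/-- The points whose class in the `m`-th partition has relative measure of `A` at least `a`. -/
def densityPoints (μ : Measure α) (p : ℕ → α → κ) (m : ℕ) (a : ℝ≥0∞) (A : Set α) : Set α :=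
  {y | a * μ (atom p m y) ≤ μ (A ∩ atom p m y)}

theorem IsRefining.measure_sdiff_densityPoints_le [Countable κ] (hp : IsRefining p) {m : ℕ}
    {a : ℝ≥0∞} {A Q : Set α} (hQ : IsSaturated p m Q) (hAQ : A ⊆ Q) :
    μ (A \ densityPoints μ p m a A) ≤ a * μ Q := by
  rw [measure_eq_tsum_inter_preimage μ (hp.measurable m) Q, ← ENNReal.tsum_mul_left]
  rw [measure_eq_tsum_inter_preimage μ (hp.measurable m)]
  refine ENNReal.tsum_le_tsum fun k ↦ ?_
  obtain hempty | ⟨y, ⟨hyA, hy⟩, rfl⟩ :=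
    ((A \ densityPoints μ p m a A) ∩ p m ⁻¹' {k}).eq_empty_or_nonempty
  · simp [hempty]
  calc μ ((A \ densityPoints μ p m a A) ∩ atom p m y) ≤ μ (A ∩ atom p m y) := by
        gcongr
        exact Set.sdiff_subset
    _ ≤ a * μ (atom p m y) := (not_le.1 hy).le
    _ = a * μ (Q ∩ atom p m y) := by
        rw [Set.inter_eq_self_of_subset_right (hQ.atom_subset (hAQ hyA))]

theorem IsRefining.le_measure_inter_saturation_densityPoints [Countable κ] (hp : IsRefining p)
    {m : ℕ} {a : ℝ≥0∞} {A Q : Set α} (hQ : IsSaturated p m Q) (hAQ : A ⊆ Q) :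
    μ A - a * μ Q ≤ μ (Q ∩ saturation p l (densityPoints μ p m a A)) := by
  rw [tsub_le_iff_right]
  calc μ A ≤ μ (A ∩ densityPoints μ p m a A) + μ (A \ densityPoints μ p m a A) :=
        measure_le_inter_add_sdiff _ _ _
    _ ≤ _ := by
        gcongr
        · exact subset_saturation
        · exact hp.measure_sdiff_densityPoints_le hQ hAQ

end RefiningPartitions

section Dyadic

variable {ι : Type*} {h : ℝ} {j : ℕ} {x y : EuclideanSpace ℝ ι}

lemma gridIndex_two_mul (h : ℝ) (x : EuclideanSpace ℝ ι) (i : ι) :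
    gridIndex (2 * h) x i = gridIndex h x i / 2 := by
  rw [gridIndex, gridIndex, mul_comm, ← div_div]
  exact_mod_cast Int.floor_div_natCast ((x i + 1 / 2) / h) 2

/-- The center of the cell containing `x` in the grid of side `h`. -/
def gridCenter (h : ℝ) (x : EuclideanSpace ℝ ι) : EuclideanSpace ℝ ι :=
  WithLp.toLp 2 fun i ↦ (gridIndex h x i + 1 / 2) * h - 1 / 2

lemma abs_sub_gridCenter_le (hh : 0 < h) (x : EuclideanSpace ℝ ι) (i : ι) :
    |x i - gridCenter h x i| ≤ h / 2 := by
  have hlow : (gridIndex h x i : ℝ) * h ≤ x i + 1 / 2 := (le_div_iff₀ hh).1 (Int.floor_le _)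
  have hup : x i + 1 / 2 < (gridIndex h x i + 1) * h := (div_lt_iff₀ hh).1 (Int.lt_floor_add_one _)
  simp only [gridCenter, abs_le]
  constructor <;> linarith

lemma abs_gridCenter_sub_le (hh : 0 ≤ h) (hxy : gridIndex (2 * h) x = gridIndex (2 * h) y) (i : ι) :
    |gridCenter h x i - gridCenter h y i| ≤ h := by
  have hparent : gridIndex h x i / 2 = gridIndex h y i / 2 := by
    simpa only [gridIndex_two_mul] using congrFun hxy i
  have hindex : |gridIndex h x i - gridIndex h y i| ≤ 1 := abs_le.2 ⟨by lia, by lia⟩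
  calc |gridCenter h x i - gridCenter h y i|
      = |((gridIndex h x i - gridIndex h y i : ℤ) : ℝ)| * h := by
        rw [← abs_of_nonneg hh, ← abs_mul, abs_of_nonneg hh]
        simp only [gridCenter, Int.cast_sub]
        congr 1
        ring
    _ ≤ 1 * h := by
        gcongr
        exact_mod_cast hindex
    _ = h := one_mul h

lemma gridCenter_one_zero : gridCenter 1 (0 : EuclideanSpace ℝ ι) = 0 := by
  ext i
  norm_num [gridCenter, gridIndex]

variable (ι) in
/-- The half-open cube `[-1/2, 1/2)^ι`. -/
def unitCell : Set (EuclideanSpace ℝ ι) := {x | ∀ i, x i ∈ Set.Ico (-(1 / 2)) (1 / 2)}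

/-- The sequence of dyadic partitions whose first term has `unitCell` as a class. -/
def dyadicIndex (j : ℕ) : EuclideanSpace ℝ ι → ι → ℤ := gridIndex ((1 / 2) ^ j)

lemma dyadicIndex_eq_two_mul (j : ℕ) :
    dyadicIndex j = (gridIndex (2 * (1 / 2) ^ (j + 1)) : EuclideanSpace ℝ ι → ι → ℤ) := by
  rw [dyadicIndex, pow_succ', ← mul_assoc]
  norm_num

lemma atom_dyadicIndex_zero : atom dyadicIndex 0 (0 : EuclideanSpace ℝ ι) = unitCell ι := by
  ext x
  have hzero : ⌊(1 / 2 : ℝ)⌋ = 0 := by norm_num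
  simp only [atom, dyadicIndex, gridIndex, unitCell, Set.mem_preimage, Set.mem_singleton_iff,
    funext_iff, Set.mem_ofPred_eq, Set.mem_Ico, pow_zero, div_one, PiLp.zero_apply, zero_add, hzero,
    Int.floor_eq_iff, Int.cast_zero]
  refine forall_congr' fun i ↦ ?_
  constructor <;> rintro ⟨hlow, hup⟩ <;> constructor <;> linarith

lemma isRefining_dyadicIndex : IsRefining (dyadicIndex : ℕ → EuclideanSpace ℝ ι → ι → ℤ) where
  measurable j := measurable_gridIndex _
  eq_of_succ_eq {j x y} hxy := by
    rw [dyadicIndex_eq_two_mul]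
    funext i
    rw [gridIndex_two_mul, gridIndex_two_mul]
    exact congrArg (· / 2) (congrFun hxy i)

lemma isSaturated_unitCell : IsSaturated dyadicIndex j (unitCell ι) := by
  rw [← atom_dyadicIndex_zero]
  exact isRefining_dyadicIndex.isSaturated_mono j.zero_le fun _ _ hxy hx ↦ hxy.symm.trans hx

variable [Fintype ι]

lemma volume_atom_dyadicIndex (j : ℕ) (x : EuclideanSpace ℝ ι) :
    volume (atom dyadicIndex j x) = ENNReal.ofReal (((1 / 2) ^ j) ^ Fintype.card ι) :=
  volume_gridIndex_preimage_singleton (by positivity) _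

lemma volume_unitCell : volume (unitCell ι) = 1 := by
  rw [← atom_dyadicIndex_zero, volume_atom_dyadicIndex]
  simp

lemma norm_le_of_mem_unitCell (hx : x ∈ unitCell ι) : ‖x‖ ≤ √(Fintype.card ι) * (1 / 2) :=
  norm_le_sqrt_card_mul (by norm_num) fun i ↦ abs_le.2 ⟨(hx i).1, (hx i).2.le⟩

lemma ball_gridCenter_subset (hh : 0 < h) :
    ball (gridCenter h x) (h / 2) ⊆ gridIndex h ⁻¹' {gridIndex h x} := by
  intro y hy
  rw [mem_ball_iff_norm] at hy
  funext i
  have hi : |y i - gridCenter h x i| < h / 2 :=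
    (PiLp.norm_apply_le (y - gridCenter h x) i).trans_lt hy
  simp only [gridCenter, abs_lt] at hi
  rw [gridIndex, Int.floor_eq_iff, le_div_iff₀ hh, div_lt_iff₀ hh]
  constructor <;> linarith

lemma norm_sub_gridCenter_le (hh : 0 < h) (hxy : gridIndex (2 * h) x = gridIndex (2 * h) y) :
    ‖x - gridCenter h y‖ ≤ 3 / 2 * √(Fintype.card ι) * h := by
  have hcoord (i : ι) : |(x - gridCenter h y) i| ≤ 3 / 2 * h := by
    calc |(x - gridCenter h y) i|
        ≤ |x i - gridCenter h x i| + |gridCenter h x i - gridCenter h y i| := abs_sub_le _ _ _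
      _ ≤ h / 2 + h := by
          gcongr
          · exact abs_sub_gridCenter_le hh x i
          · exact abs_gridCenter_sub_le hh.le hxy i
      _ = 3 / 2 * h := by ring
  linarith [norm_le_sqrt_card_mul (by positivity) hcoord]

end Dyadic

section DensityIteration

variable {ι : Type*} [Fintype ι] {Λ β ε₁ δ γ ε κ : ℝ} {j l : ℕ}
  {ρ : EuclideanSpace ℝ ι → Measure (EuclideanSpace ℝ ι)} {u : EuclideanSpace ℝ ι → ℝ}
  {E : Set (EuclideanSpace ℝ ι)} {x y : EuclideanSpace ℝ ι}

lemma measure_sdiff_le_ofReal_mul {α : Type*} [MeasurableSpace α] {μ : Measure α} {s t : Set α}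
    (ht : MeasurableSet t) (hs : μ s ≠ ∞) (hδ : δ ∈ Set.Icc (0 : ℝ) 1)
    (h : ENNReal.ofReal (1 - δ) * μ s ≤ μ (t ∩ s)) : μ (s \ t) ≤ ENNReal.ofReal δ * μ s := by
  have hfin : ENNReal.ofReal (1 - δ) * μ s ≠ ∞ := ENNReal.mul_ne_top ENNReal.ofReal_ne_top hs
  refine (ENNReal.add_le_add_iff_left hfin).1 ?_
  calc ENNReal.ofReal (1 - δ) * μ s + μ (s \ t) ≤ μ (s ∩ t) + μ (s \ t) := by
        rw [Set.inter_comm]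
        gcongr
    _ = μ s := measure_inter_add_sdiff s ht
    _ = ENNReal.ofReal (1 - δ) * μ s + ENNReal.ofReal δ * μ s := by
        rw [← add_mul, ← ENNReal.ofReal_add (sub_nonneg.2 hδ.2) hδ.1, sub_add_cancel,
          ENNReal.ofReal_one, one_mul]

lemma PointEstimate.le_of_le_volume_inter_atom
    (h : PointEstimate (EuclideanSpace ℝ ι) Λ β √(Fintype.card ι) ε₁ δ γ)
    (hδ : δ ∈ Set.Icc (0 : ℝ) 1) (hε : ε ∈ Set.Ioo 0 (ε₁ * (1 / 2) ^ j))
    (hρ : ∀ x, IsStepLaw Λ β (ρ x)) (hκ : 0 < κ) (hu : IsSupersolution ε ρ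
      (ball (gridCenter ((1 / 2) ^ j) y) (5 * √(Fintype.card ι) * (1 / 2) ^ j)) u)
    (hE : MeasurableSet E) (hEu : ∀ x ∈ E, κ ≤ u x)
    (hvol : ENNReal.ofReal (1 - δ) * volume (atom dyadicIndex j y) ≤
      volume (E ∩ atom dyadicIndex j y))
    (hx : ‖x - gridCenter ((1 / 2) ^ j) y‖ ≤ 3 / 2 * √(Fintype.card ι) * (1 / 2) ^ j) :
    γ * κ ≤ u x := by
  have hs : (0 : ℝ) < (1 / 2) ^ j := by positivity
  refine h.le_of_volume_sdiff_le hs hε hρ hκ hu ?_ hx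
  calc volume (ball (gridCenter ((1 / 2) ^ j) y) ((1 / 2) ^ j / 2) \ {z | κ ≤ u z})
      ≤ volume (atom dyadicIndex j y \ E) :=
        measure_mono (Set.sdiff_subset_sdiff (ball_gridCenter_subset hs) hEu)
    _ ≤ ENNReal.ofReal δ * volume (atom dyadicIndex j y) :=
        measure_sdiff_le_ofReal_mul hE (by simp [volume_atom_dyadicIndex]) hδ hvol
    _ = _ := by
        rw [volume_atom_dyadicIndex, finrank_euclideanSpace, ENNReal.ofReal_mul hδ.1]

lemma PointEstimate.le_of_mem_unitCell
    (h : PointEstimate (EuclideanSpace ℝ ι) Λ β √(Fintype.card ι) ε₁ δ γ)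
    (hδ : δ ∈ Set.Icc (0 : ℝ) 1) (hε : ε ∈ Set.Ioo 0 ε₁) (hρ : ∀ x, IsStepLaw Λ β (ρ x))
    (hκ : 0 < κ) (hu : IsSupersolution ε ρ (ball 0 (5 * √(Fintype.card ι))) u)
    (hE : MeasurableSet E) (hEu : ∀ x ∈ E, κ ≤ u x)
    (hvol : ENNReal.ofReal (1 - δ) ≤ volume (E ∩ unitCell ι)) (hx : x ∈ unitCell ι) :
    γ * κ ≤ u x := by
  refine h.le_of_le_volume_inter_atom (j := 0) (y := 0) hδ (by simpa using hε) hρ hκ ?_ hE hEu ?_ ?_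
  · simpa [gridCenter_one_zero] using hu
  · simpa [atom_dyadicIndex_zero, volume_unitCell] using hvol
  · rw [pow_zero, gridCenter_one_zero, sub_zero, mul_one]
    linarith [norm_le_of_mem_unitCell hx, Real.sqrt_nonneg (Fintype.card ι)]

lemma PointEstimate.le_of_mem_denseParents
    (h : PointEstimate (EuclideanSpace ℝ ι) Λ β √(Fintype.card ι) ε₁ δ γ) (hε₁ : 0 < ε₁)
    (hδ : δ ∈ Set.Icc (0 : ℝ) 1) (hε : ε ∈ Set.Ioo 0 (ε₁ * (1 / 2) ^ l))
    (hρ : ∀ x, IsStepLaw Λ β (ρ x)) (hκ : 0 < κ)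
    (hu : IsSupersolution ε ρ (ball 0 (5 * √(Fintype.card ι))) u)
    (hE : MeasurableSet E) (hEu : ∀ x ∈ E, κ ≤ u x) (hx : x ∈ unitCell ι)
    (hxE : x ∈ denseParents volume dyadicIndex (ENNReal.ofReal (1 - δ)) l E) : γ * κ ≤ u x := by
  obtain ⟨j, hjl, y, hyx, hdense⟩ := hxE
  set s : ℝ := (1 / 2) ^ (j + 1)
  set n := √(Fintype.card ι)
  have hs : 0 < s := by positivity
  have hs2 : s ≤ 1 / 2 := pow_le_of_le_one (by norm_num) (by norm_num) j.succ_ne_zero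
  have hls : (1 / 2 : ℝ) ^ l ≤ s := pow_le_pow_of_le_one (by norm_num) (by norm_num) hjl
  have hcenter : gridCenter s y ∈ unitCell ι :=
    isSaturated_unitCell
      (isRefining_dyadicIndex.eq_of_succ_eq
        (ball_gridCenter_subset hs (mem_ball_self (by positivity)))).symm
      (isSaturated_unitCell hyx.symm hx)
  refine h.le_of_le_volume_inter_atom hδ ⟨hε.1, hε.2.trans_le (by gcongr)⟩ hρ hκ
    (hu.mono (ball_subset_ball' ?_)) hE hEu hdense.le ?_
  · rw [dist_zero_right]
    have : 5 * n * s ≤ 5 * n * (1 / 2) := by gcongr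
    linarith [norm_le_of_mem_unitCell hcenter, Real.sqrt_nonneg (Fintype.card ι)]
  · refine norm_sub_gridCenter_le hs ?_
    rw [← dyadicIndex_eq_two_mul]
    exact hyx.symm

-- A set of density at most `1 - δ` grows by the factor `(1 - δ)⁻¹` when passing to its dense
-- parents, so this can happen at most `K` times.
theorem PointEstimate.pow_mul_le_of_isSaturated
    (h : PointEstimate (EuclideanSpace ℝ ι) Λ β √(Fintype.card ι) ε₁ δ γ) (hε₁ : 0 < ε₁)
    (hδ : δ ∈ Set.Ioo (0 : ℝ) 1) (hγ : γ ∈ Set.Ioc (0 : ℝ) 1)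
    (hε : ε ∈ Set.Ioo 0 (ε₁ * (1 / 2) ^ l)) (hρ : ∀ x, IsStepLaw Λ β (ρ x))
    (hu : IsSupersolution ε ρ (ball 0 (5 * √(Fintype.card ι))) u) {K : ℕ} (hκ : 0 < κ)
    (hE : IsSaturated dyadicIndex l E) (hEQ : E ⊆ unitCell ι) (hEu : ∀ x ∈ E, κ ≤ u x)
    (hvol : ENNReal.ofReal ((1 - δ) ^ K) < volume E) (hx : x ∈ unitCell ι) :
    γ ^ K * κ ≤ u x := by
  have hδ' : δ ∈ Set.Icc (0 : ℝ) 1 := Set.Ioo_subset_Icc_self hδ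
  have hEm {F : Set (EuclideanSpace ℝ ι)} (hF : IsSaturated dyadicIndex l F) : MeasurableSet F :=
    isRefining_dyadicIndex.measurableSet_of_isSaturated hF
  induction K generalizing κ E with
  | zero =>
    refine absurd (measure_mono (μ := volume) hEQ) (not_le.2 ?_)
    simpa [volume_unitCell] using hvol
  | succ K ih =>
    obtain hbig | hsmall := le_total (ENNReal.ofReal (1 - δ)) (volume (E ∩ unitCell ι))
    · have hε' : ε ∈ Set.Ioo 0 ε₁ := ⟨hε.1, hε.2.trans_le
        (mul_le_of_le_one_right hε₁.le (pow_le_one₀ (by norm_num) (by norm_num)))⟩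
      calc γ ^ (K + 1) * κ ≤ γ * κ := by
            gcongr
            exact pow_le_of_le_one hγ.1.le hγ.2 K.succ_ne_zero
        _ ≤ u x := h.le_of_mem_unitCell hδ' hε' hρ hκ hu (hEm hE) hEu hbig hx
    · set F := denseParents volume dyadicIndex (ENNReal.ofReal (1 - δ)) l E ∩ unitCell ι
      have hgrowth : volume E ≤ ENNReal.ofReal (1 - δ) * volume F := by
        simpa only [atom_dyadicIndex_zero, Set.inter_eq_self_of_subset_left hEQ] using
          isRefining_dyadicIndex.measure_inter_atom_le_denseParents (μ := volume)
            (ENNReal.ofReal_lt_one.2 (by linarith [hδ.1])) (by simp [volume_atom_dyadicIndex])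
            hE l.zero_le 0 (by simpa [atom_dyadicIndex_zero, volume_unitCell] using hsmall)
      rw [pow_succ, mul_assoc]
      refine ih (mul_pos hγ.1 hκ)
        (isRefining_dyadicIndex.isSaturated_denseParents.inter isSaturated_unitCell)
        Set.inter_subset_right
        (fun z hz ↦ h.le_of_mem_denseParents hε₁ hδ' hε hρ hκ hu (hEm hE) hEu hz.2 hz.1) ?_
      refine lt_of_mul_lt_mul_left' (hvol.trans_le hgrowth |>.trans_eq' ?_)
      rw [pow_succ', ENNReal.ofReal_mul (sub_nonneg.2 hδ.2.le)]

end DensityIteration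

section Growth

variable {E : Type*} [NormedAddCommGroup E] [InnerProductSpace ℝ E] [FiniteDimensional ℝ E]
  [MeasurableSpace E] [BorelSpace E] {Λ β ε t κ : ℝ} {ρ : E → Measure E} {u : E → ℝ} {D S : Set E}
  {x y : E}

lemma IsSupersolution.mul_le_of_volume_le (hu : IsSupersolution ε ρ D u)
    (hρ : IsStepLaw Λ β (ρ x)) (hβ : 0 < β) (hε : 0 < ε) (hx : x ∈ D) (hS : MeasurableSet S)
    (hSx : S ⊆ ball x ε) (ht : 0 ≤ t) (htu : ∀ y ∈ S, t ≤ u y) {v : ℝ}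
    (hv : ENNReal.ofReal v * volume (ball x ε) ≤ volume S) : t * (β * v) ≤ u x := by
  obtain ⟨M, hM⟩ := hu.bounded
  have hint : Integrable (fun z ↦ u (x + ε • z)) (ρ x) :=
    hρ.integrable_of_bound (hu.measurable.comp (by fun_prop)) fun z _ ↦ by
      rw [abs_of_nonneg (hu.nonneg _)]
      exact hM _
  have hball : ENNReal.ofReal (t * v) * volume (ball x ε)
      ≤ ENNReal.ofReal (u x / β) * volume (ball x ε) :=
    calc ENNReal.ofReal (t * v) * volume (ball x ε) ≤ ENNReal.ofReal t * volume S := by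
          rw [ENNReal.ofReal_mul ht, mul_assoc]
          gcongr
      _ = ∫⁻ _ in S, ENNReal.ofReal t := (setLIntegral_const _ _).symm
      _ ≤ ∫⁻ y in S, ENNReal.ofReal (u y) :=
          setLIntegral_mono' hS fun y hy ↦ ENNReal.ofReal_le_ofReal (htu y hy)
      _ ≤ ∫⁻ y in ball x ε, ENNReal.ofReal (u y) := lintegral_mono_set hSx
      _ ≤ _ := hρ.setLIntegral_ball_le hβ hε x hu.measurable hint (fun z _ ↦ hu.nonneg _)
          (hu.integral_le x hx)
  rw [ENNReal.mul_le_mul_iff_left (measure_ball_pos volume x hε).ne' measure_ball_lt_top.ne,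
    ENNReal.ofReal_le_ofReal_iff (div_nonneg (hu.nonneg x) hβ.le), le_div_iff₀ hβ] at hball
  linarith

omit [FiniteDimensional ℝ E] [MeasurableSpace E] [BorelSpace E] in
lemma exists_ball_subset_ball_inter_ball {r R : ℝ} (hr : 0 < r) (hR : 0 ≤ R)
    (hx : x ∈ ball y (R + 2 * r)) : ∃ z, ball z r ⊆ ball y (R + r) ∧ ball z r ⊆ ball x (4 * r) := by
  obtain ⟨z, hxz, hzy⟩ := exists_dist_le_le (by positivity : 0 ≤ 2 * r) hR (mem_ball.1 hx).le
  refine ⟨z, ball_subset_ball' (by linarith), ball_subset_ball' ?_⟩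
  rw [dist_comm]
  linarith

theorem IsSupersolution.mul_pow_le_of_mem_ball (hu : IsSupersolution ε ρ D u)
    (hρ : ∀ x, IsStepLaw Λ β (ρ x)) (hβ : 0 < β) (hε : 0 < ε) (hκ : 0 ≤ κ)
    (hκu : ∀ x ∈ ball y (ε / 4), κ ≤ u x) (k : ℕ) (hD : ball y ((k + 1) * (ε / 4)) ⊆ D)
    (hx : x ∈ ball y ((k + 1) * (ε / 4))) : κ * (β * (1 / 4) ^ finrank ℝ E) ^ k ≤ u x := by
  induction k generalizing x with
  | zero => simpa using hκu x (by simpa using hx)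
  | succ k ih =>
    obtain ⟨z, hzy, hzx⟩ := exists_ball_subset_ball_inter_ball (r := ε / 4) (R := k * (ε / 4))
      (by positivity) (by positivity) (by convert hx using 2; push_cast; ring)
    rw [← add_one_mul] at hzy
    rw [mul_div_cancel₀ ε four_ne_zero] at hzx
    have hball : ball y ((k + 1) * (ε / 4)) ⊆ D :=
      (ball_subset_ball (by push_cast; gcongr; linarith)).trans hD
    rw [pow_succ, ← mul_assoc]
    refine hu.mul_le_of_volume_le (hρ x) hβ hε (hD hx) measurableSet_ball hzx (by positivity)
      (fun w hw ↦ ih hball (hzy hw)) (le_of_eq ?_)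
    rw [show ε / 4 = 1 / 4 * ε by ring,
      Measure.addHaar_ball_mul_of_pos volume z (by norm_num : (0 : ℝ) < 1 / 4),
      Measure.addHaar_ball_center volume x]

end Growth

section LowerBound

variable {ι : Type*} [Fintype ι] {Λ β ε : ℝ}
  {ρ : EuclideanSpace ℝ ι → Measure (EuclideanSpace ℝ ι)} {u : EuclideanSpace ℝ ι → ℝ}
  {D A : Set (EuclideanSpace ℝ ι)} {y : EuclideanSpace ℝ ι}

lemma exists_dyadic_scales {n ε₁ : ℝ} (hn : 0 < n) (hε₁ : 0 < ε₁) :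
    ∃ (k M : ℕ) (q : ℝ), 0 < q ∧ ∀ ε ∈ Set.Ioo 0 (ε₁ / 2), ∃ l : ℕ,
      ε < ε₁ * (1 / 2) ^ l ∧ n * (1 / 2) ^ l ≤ k * (ε / 4) ∧
      n * (1 / 2) ^ (l + M) ≤ ε / 4 ∧ q * ε ≤ (1 / 2) ^ (l + M) := by
  obtain ⟨M, hM⟩ := exists_pow_lt_of_lt_one (show 0 < ε₁ / (16 * n) by positivity)
    (show (1 / 2 : ℝ) < 1 by norm_num)
  refine ⟨⌈16 * n / ε₁⌉₊, M, 2 / ε₁ * (1 / 2) ^ M, by positivity, fun ε ⟨hε, hεε₁⟩ ↦ ?_⟩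
  obtain ⟨l, hl, hl'⟩ := exists_nat_pow_near_of_lt_one (x := 2 * ε / ε₁) (y := 1 / 2)
    (by positivity) (by rw [div_le_one hε₁]; linarith) (by norm_num) (by norm_num)
  have hlow : (1 / 2) ^ l ≤ 4 * ε / ε₁ := by
    rw [pow_succ] at hl
    linarith [show 4 * ε / ε₁ = 2 * (2 * ε / ε₁) by ring]
  refine ⟨l, ?_, ?_, ?_, ?_⟩
  · rw [div_le_iff₀ hε₁] at hl'
    linarith
  · calc n * (1 / 2) ^ l ≤ n * (4 * ε / ε₁) := by gcongr
      _ = 16 * n / ε₁ * (ε / 4) := by ring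
      _ ≤ ⌈16 * n / ε₁⌉₊ * (ε / 4) := by
          gcongr
          exact Nat.le_ceil _
  · calc n * (1 / 2) ^ (l + M) = n * ((1 / 2) ^ l * (1 / 2) ^ M) := by rw [pow_add]
      _ ≤ n * (4 * ε / ε₁ * (ε₁ / (16 * n))) := by gcongr
      _ = ε / 4 := by
          field_simp
          norm_num
  · calc 2 / ε₁ * (1 / 2) ^ M * ε = 2 * ε / ε₁ * (1 / 2) ^ M := by ring
      _ ≤ (1 / 2) ^ (l + M) := by
          rw [pow_add]
          gcongr

lemma IsSupersolution.le_of_mem_densityPoints {m : ℕ} {a q : ℝ} (hu : IsSupersolution ε ρ D u)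
    (hρ : ∀ x, IsStepLaw Λ β (ρ x)) (hβ : 0 < β) (hε : 0 < ε) (ha : 0 ≤ a) (hq : 0 ≤ q)
    (hmesh : √(Fintype.card ι) * (1 / 2) ^ m ≤ ε / 4) (hqε : q * ε ≤ (1 / 2) ^ m)
    (hA : ∀ x ∈ A, 1 ≤ u x)
    (hy : y ∈ densityPoints volume dyadicIndex m (ENNReal.ofReal a) A)
    {x : EuclideanSpace ℝ ι} (hx : x ∈ ball y (ε / 4)) (hxD : x ∈ D) :
    β * (a * q ^ Fintype.card ι / volume.real (ball (0 : EuclideanSpace ℝ ι) 1)) ≤ u x := by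
  set S := {z | 1 ≤ u z} ∩ atom dyadicIndex m y
  have hS : MeasurableSet S := (measurableSet_le measurable_const hu.measurable).inter
    isRefining_dyadicIndex.measurableSet_atom
  have hSx : S ⊆ ball x ε := fun z hz ↦ by
    have hzy : dist z y ≤ √(Fintype.card ι) * (1 / 2) ^ m :=
      (dist_eq_norm z y).trans_le (norm_sub_le_of_gridIndex_eq (by positivity) hz.2)
    rw [mem_ball] at hx ⊢
    linarith [dist_triangle_right z x y]
  rw [← one_mul (β * _)]
  refine hu.mul_le_of_volume_le (hρ x) hβ hε hxD hS hSx zero_le_one (fun z hz ↦ hz.1) ?_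
  have hω : volume (ball (0 : EuclideanSpace ℝ ι) 1)
      = ENNReal.ofReal (volume.real (ball (0 : EuclideanSpace ℝ ι) 1)) :=
    (ofReal_measureReal measure_ball_lt_top.ne).symm
  have hω0 : 0 < volume.real (ball (0 : EuclideanSpace ℝ ι) 1) :=
    ENNReal.toReal_pos (measure_ball_pos volume _ zero_lt_one).ne' measure_ball_lt_top.ne
  calc _ = ENNReal.ofReal (a * (q * ε) ^ Fintype.card ι) := by
        rw [Measure.addHaar_ball_of_pos volume x hε, finrank_euclideanSpace, hω,
          ← ENNReal.ofReal_mul (by positivity), ← ENNReal.ofReal_mul (by positivity)]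
        congr 1
        field_simp
        ring
    _ ≤ ENNReal.ofReal a * volume (atom dyadicIndex m y) := by
        rw [volume_atom_dyadicIndex, ← ENNReal.ofReal_mul ha]
        gcongr
    _ ≤ volume (A ∩ atom dyadicIndex m y) := hy
    _ ≤ volume S := measure_mono (Set.inter_subset_inter_left _ hA)

lemma IsSupersolution.le_of_mem_saturation [Nonempty ι] {k l m : ℕ} {a q : ℝ}
    (hu : IsSupersolution ε ρ (ball 0 (5 * √(Fintype.card ι))) u)
    (hρ : ∀ x, IsStepLaw Λ β (ρ x)) (hβ : 0 < β) (hε : 0 < ε) (ha : 0 ≤ a) (hq : 0 ≤ q)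
    (hkε : (k + 1) * ε ≤ 1) (hl : √(Fintype.card ι) * (1 / 2) ^ l ≤ k * (ε / 4))
    (hm : √(Fintype.card ι) * (1 / 2) ^ m ≤ ε / 4) (hqε : q * ε ≤ (1 / 2) ^ m)
    (hA : ∀ x ∈ A, 1 ≤ u x) {x : EuclideanSpace ℝ ι} (hx : x ∈ unitCell ι)
    (hxA : x ∈ saturation dyadicIndex l
      (densityPoints volume dyadicIndex m (ENNReal.ofReal a) A)) :
    β * (a * q ^ Fintype.card ι / volume.real (ball (0 : EuclideanSpace ℝ ι) 1)) *
      (β * (1 / 4) ^ Fintype.card ι) ^ k ≤ u x := by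
  obtain ⟨y, hy, hyx⟩ := hxA
  have hn : 1 ≤ √(Fintype.card ι) := Real.one_le_sqrt.2 (by exact_mod_cast Fintype.card_pos)
  have hyn : ‖y‖ ≤ √(Fintype.card ι) * (1 / 2) :=
    norm_le_of_mem_unitCell (isSaturated_unitCell hyx.symm hx)
  have hD : ball y ((k + 1) * (ε / 4)) ⊆ ball 0 (5 * √(Fintype.card ι)) :=
    ball_subset_ball' (by rw [dist_zero_right]; linarith)
  have hxy : dist x y ≤ √(Fintype.card ι) * (1 / 2) ^ l :=
    (dist_eq_norm x y).trans_le (norm_sub_le_of_gridIndex_eq (by positivity) hyx.symm)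
  rw [← finrank_euclideanSpace (𝕜 := ℝ)]
  refine hu.mul_pow_le_of_mem_ball hρ hβ hε (by positivity) (fun z hz ↦ ?_) k hD ?_
  · rw [finrank_euclideanSpace]
    refine hu.le_of_mem_densityPoints hρ hβ hε ha hq hm hqε hA hy hz (hD ?_)
    exact ball_subset_ball (le_mul_of_one_le_left (by positivity) (by simp)) hz
  · rw [mem_ball]
    linarith

theorem exists_lt_of_isSupersolution (ι : Type*) [Fintype ι] [Nonempty ι] {Λ β : ℝ} (hΛ : 1 ≤ Λ)
    (hβ : 0 < β) : ∃ ε₀ > 0, ∀ a > 0, ∃ c > 0, ∀ ε ∈ Set.Ioo 0 ε₀,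
      ∀ ρ : EuclideanSpace ℝ ι → Measure (EuclideanSpace ℝ ι), (∀ x, IsStepLaw Λ β (ρ x)) →
      ∀ u, IsSupersolution ε ρ (ball 0 (5 * √(Fintype.card ι))) u →
      ENNReal.ofReal a ≤ volume ({x | 1 ≤ u x} ∩ unitCell ι) → ∀ x ∈ unitCell ι, c < u x := by
  have hn : 1 ≤ √(Fintype.card ι) := Real.one_le_sqrt.2 (by exact_mod_cast Fintype.card_pos)
  obtain ⟨ε₁, δ, γ, hε₁, hδ, hγ, hpoint⟩ := exists_pointEstimate ι hΛ hβ hn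
  obtain ⟨k, M, q, hq, hscales⟩ := exists_dyadic_scales (zero_lt_one.trans_le hn) hε₁
  refine ⟨min (ε₁ / 2) (1 / (k + 1)), by positivity, fun a ha ↦ ?_⟩
  obtain ⟨K, hK⟩ := exists_pow_lt_of_lt_one (half_pos ha) (sub_lt_self 1 hδ.1)
  set κ := β * (a / 2 * q ^ Fintype.card ι / volume.real (ball (0 : EuclideanSpace ℝ ι) 1)) *
    (β * (1 / 4) ^ Fintype.card ι) ^ k
  have hκ : 0 < κ := by
    have : 0 < volume.real (ball (0 : EuclideanSpace ℝ ι) 1) :=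
      ENNReal.toReal_pos (measure_ball_pos volume _ zero_lt_one).ne' measure_ball_lt_top.ne
    positivity
  have hγκ : 0 < γ ^ K * κ := mul_pos (pow_pos hγ.1 K) hκ
  refine ⟨γ ^ K * κ / 2, half_pos hγκ, fun ε ⟨hε, hεε₀⟩ ρ hρ u hu hvol x hx ↦ ?_⟩
  obtain ⟨hε₁', hkε⟩ := lt_min_iff.1 hεε₀
  rw [lt_div_iff₀' (by positivity)] at hkε
  obtain ⟨l, hεl, hl, hm, hqε⟩ := hscales ε ⟨hε, hε₁'⟩
  set A := {x | 1 ≤ u x} ∩ unitCell ι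
  refine (half_lt_self hγκ).trans_le (hpoint.pow_mul_le_of_isSaturated hε₁ hδ hγ ⟨hε, hεl⟩ hρ hu hκ
    (isSaturated_unitCell.inter isSaturated_saturation) Set.inter_subset_left
    (fun z hz ↦ hu.le_of_mem_saturation hρ hβ hε (half_pos ha).le hq.le hkε.le hl hm hqε
      (fun w (hw : w ∈ A) ↦ hw.1) hz.1 hz.2) ?_ hx)
  calc ENNReal.ofReal ((1 - δ) ^ K) < ENNReal.ofReal a - ENNReal.ofReal (a / 2) := by
        rw [← ENNReal.ofReal_sub _ (half_pos ha).le, sub_half]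
        exact (ENNReal.ofReal_lt_ofReal_iff (half_pos ha)).2 hK
    _ ≤ volume A - ENNReal.ofReal (a / 2) * volume (unitCell ι) := by
        rw [volume_unitCell, mul_one]
        gcongr
    _ ≤ _ := isRefining_dyadicIndex.le_measure_inter_saturation_densityPoints (m := l + M)
        isSaturated_unitCell Set.inter_subset_right

end LowerBound

section ReachValue

variable {S : Type*} [MeasurableSpace S] (κ : Kernel S S) (A D : Set S)

/-- The dynamic programming operator for the event that a Markov chain with transition kernel `κ`
hits `A` before leaving `D`, with payoff `v` after one step in `D \ A`. -/
def reachStep (v : S → ℝ≥0∞) : S → ℝ≥0∞ :=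
  A.indicator 1 + (D \ A).indicator fun x ↦ ∫⁻ y, v y ∂κ x

/-- The probability that a Markov chain with transition kernel `κ` hits `A` before leaving `D`, as a
function of the starting point. It is the limit over `n` of the probabilities of doing so in fewer
than `n` steps. -/
def reachValue (x : S) : ℝ≥0∞ := ⨆ n, (reachStep κ A D)^[n] 0 x

variable {κ A D} {v : S → ℝ≥0∞} {x : S}

lemma reachStep_of_mem (hx : x ∈ A) : reachStep κ A D v x = 1 := by simp [reachStep, hx]

lemma reachStep_of_mem_diff (hx : x ∈ D \ A) : reachStep κ A D v x = ∫⁻ y, v y ∂κ x := by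
  simp [reachStep, hx, hx.2]

lemma reachStep_of_notMem (hxA : x ∉ A) (hxD : x ∉ D) : reachStep κ A D v x = 0 := by
  simp [reachStep, hxA, hxD]

lemma monotone_reachStep : Monotone (reachStep κ A D) := fun _ _ hvw ↦
  add_le_add_right (Set.indicator_mono fun _ ↦ lintegral_mono hvw) _

lemma measurable_reachStep (hA : MeasurableSet A) (hD : MeasurableSet D) (hv : Measurable v) :
    Measurable (reachStep κ A D v) :=
  (measurable_one.indicator hA).add (hv.lintegral_kernel.indicator (hD.diff hA))

lemma reachStep_le_one [IsMarkovKernel κ] (hv : v ≤ 1) : reachStep κ A D v ≤ 1 := fun x ↦ by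
  by_cases hxA : x ∈ A
  · exact (reachStep_of_mem hxA).le
  by_cases hxD : x ∈ D
  · rw [reachStep_of_mem_diff ⟨hxD, hxA⟩]
    exact (lintegral_mono hv).trans (by simp)
  · simp [reachStep_of_notMem hxA hxD]

lemma monotone_iterate_reachStep : Monotone fun n ↦ (reachStep κ A D)^[n] 0 :=
  monotone_reachStep.monotone_iterate_of_le_map zero_le

lemma measurable_iterate_reachStep (hA : MeasurableSet A) (hD : MeasurableSet D) (n : ℕ) :
    Measurable ((reachStep κ A D)^[n] 0) :=
  Function.Iterate.rec Measurable measurable_zero (fun _ ↦ measurable_reachStep hA hD) n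

lemma measurable_reachValue (hA : MeasurableSet A) (hD : MeasurableSet D) :
    Measurable (reachValue κ A D) :=
  .iSup (measurable_iterate_reachStep hA hD)

lemma reachValue_le_one [IsMarkovKernel κ] (x : S) : reachValue κ A D x ≤ 1 :=
  iSup_le fun n ↦ Function.Iterate.rec (· ≤ 1) zero_le_one (fun _ ↦ reachStep_le_one) n x

lemma reachValue_of_mem [IsMarkovKernel κ] (hx : x ∈ A) : reachValue κ A D x = 1 :=
  (reachValue_le_one x).antisymm (le_iSup_of_le 1 (reachStep_of_mem hx).ge)

lemma lintegral_reachValue_le [IsMarkovKernel κ] (hA : MeasurableSet A) (hD : MeasurableSet D)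
    (hx : x ∈ D) : ∫⁻ y, reachValue κ A D y ∂κ x ≤ reachValue κ A D x := by
  by_cases hxA : x ∈ A
  · calc ∫⁻ y, reachValue κ A D y ∂κ x ≤ ∫⁻ _, 1 ∂κ x := lintegral_mono reachValue_le_one
      _ = 1 := by simp
      _ = reachValue κ A D x := (reachValue_of_mem hxA).symm
  · simp only [reachValue]
    rw [lintegral_iSup (measurable_iterate_reachStep hA hD) monotone_iterate_reachStep]
    refine iSup_le fun n ↦ le_iSup_of_le (n + 1) ?_
    rw [Function.iterate_succ_apply', reachStep_of_mem_diff ⟨hx, hxA⟩]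

end ReachValue

section ReachEvent

variable {S Ω : Type*} {A B D : Set S} {X : ℕ → Ω → S} {k : ℕ}

/-- The event that the process `X` hits `A` before leaving `D`. -/
def reachEvent (X : ℕ → Ω → S) (A D : Set S) : Set Ω :=
  {ω | ∃ k, X k ω ∈ A ∧ ∀ j < k, X j ω ∈ D}

/-- The event that the process `X` stays in `B` at all times before `k`. -/
def stayEvent (X : ℕ → Ω → S) (B : Set S) (k : ℕ) : Set Ω :=
  {ω | ∀ j < k, X j ω ∈ B}

lemma stayEvent_zero : stayEvent X B 0 = Set.univ := by simp [stayEvent]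

lemma stayEvent_succ : stayEvent X B (k + 1) = stayEvent X B k ∩ X k ⁻¹' B := by
  ext ω
  simp only [stayEvent, Nat.forall_lt_succ_right]
  rfl

lemma stayEvent_inter_preimage_subset_reachEvent :
    stayEvent X (D \ A) k ∩ X k ⁻¹' A ⊆ reachEvent X A D :=
  fun _ hω ↦ ⟨k, hω.2, fun j hj ↦ (hω.1 j hj).1⟩

lemma measure_add_measure_stayEvent_le [MeasurableSpace Ω] {μ : Measure Ω}
    (hXA : MeasurableSet (X k ⁻¹' A)) :
    μ (stayEvent X (D \ A) k ∩ X k ⁻¹' A) + μ (stayEvent X (D \ A) (k + 1) ∩ reachEvent X A D)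
      ≤ μ (stayEvent X (D \ A) k ∩ reachEvent X A D) := by
  rw [← measure_inter_add_sdiff (stayEvent X (D \ A) k ∩ reachEvent X A D) hXA]
  refine add_le_add (measure_mono fun ω hω ↦ ?_) (measure_mono fun ω hω ↦ ?_)
  · exact ⟨⟨hω.1, stayEvent_inter_preimage_subset_reachEvent hω⟩, hω.2⟩
  · rw [stayEvent_succ] at hω
    exact ⟨⟨hω.1.1, hω.2⟩, hω.1.2.2⟩

end ReachEvent

section MarkovChain

variable {S Ω : Type*} [MeasurableSpace S] {m0 : MeasurableSpace Ω} {κ : Kernel S S} {A D : Set S}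
  {𝔉 : Filtration ℕ m0} {X : ℕ → Ω → S} {μ : Measure Ω} {k : ℕ}

/-- `X` is a Markov chain with transition kernel `κ` for the filtration `𝔉`. The condition on the
conditional law of `X (k + 1)` is integrated over the events of `𝔉 k`. -/
structure IsMarkovChain (κ : Kernel S S) (𝔉 : Filtration ℕ m0) (X : ℕ → Ω → S)
    (μ : Measure Ω) : Prop where
  adapted : Adapted 𝔉 X
  map_succ : ∀ k F, MeasurableSet[𝔉 k] F →
    (μ.restrict F).map (X (k + 1)) = κ ∘ₘ (μ.restrict F).map (X k)

lemma IsMarkovChain.measurable (h : IsMarkovChain κ 𝔉 X μ) (k : ℕ) : Measurable (X k) :=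
  (h.adapted k).mono (𝔉.le k) le_rfl

lemma IsMarkovChain.setLIntegral_succ (h : IsMarkovChain κ 𝔉 X μ) {F : Set Ω}
    (hF : MeasurableSet[𝔉 k] F) {f : S → ℝ≥0∞} (hf : Measurable f) :
    ∫⁻ ω in F, f (X (k + 1) ω) ∂μ = ∫⁻ ω in F, ∫⁻ y, f y ∂κ (X k ω) ∂μ := by
  rw [← lintegral_map hf (h.measurable _), h.map_succ k F hF,
    Measure.lintegral_bind κ.measurable.aemeasurable hf.aemeasurable,
    lintegral_map hf.lintegral_kernel (h.measurable k)]

lemma measurableSet_stayEvent_succ (hX : Adapted 𝔉 X) {B : Set S} (hB : MeasurableSet B) (k : ℕ) :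
    MeasurableSet[𝔉 k] (stayEvent X B (k + 1)) := by
  rw [stayEvent, Set.ofPred_forall]
  refine MeasurableSet.iInter fun j ↦ ?_
  rw [Set.ofPred_forall]
  exact MeasurableSet.iInter fun hj ↦ 𝔉.mono (Nat.lt_succ_iff.1 hj) _ (hX j hB)

lemma IsMarkovChain.setLIntegral_reachStep_eq (h : IsMarkovChain κ 𝔉 X μ) (hA : MeasurableSet A)
    (hD : MeasurableSet D) {v : S → ℝ≥0∞} (hv : Measurable v) :
    ∫⁻ ω in stayEvent X (D \ A) k, reachStep κ A D v (X k ω) ∂μ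
      = μ (stayEvent X (D \ A) k ∩ X k ⁻¹' A) +
        ∫⁻ ω in stayEvent X (D \ A) (k + 1), v (X (k + 1) ω) ∂μ := by
  have hXA := h.measurable k hA
  have hXD := h.measurable k (hD.diff hA)
  calc ∫⁻ ω in stayEvent X (D \ A) k, reachStep κ A D v (X k ω) ∂μ
      = ∫⁻ ω in stayEvent X (D \ A) k, (X k ⁻¹' A).indicator 1 ω +
          (X k ⁻¹' (D \ A)).indicator (fun ω ↦ ∫⁻ y, v y ∂κ (X k ω)) ω ∂μ := rfl
    _ = μ (stayEvent X (D \ A) k ∩ X k ⁻¹' A) +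
          ∫⁻ ω in stayEvent X (D \ A) (k + 1), ∫⁻ y, v y ∂κ (X k ω) ∂μ := by
        rw [lintegral_add_left (measurable_one.indicator hXA), lintegral_indicator_one hXA,
          lintegral_indicator hXD, Measure.restrict_apply hXA, Measure.restrict_restrict hXD,
          stayEvent_succ, Set.inter_comm (X k ⁻¹' A), Set.inter_comm (X k ⁻¹' (D \ A))]
    _ = _ := by
        rw [h.setLIntegral_succ (measurableSet_stayEvent_succ h.adapted (hD.diff hA) k) hv]

lemma IsMarkovChain.setLIntegral_iterate_reachStep_le (h : IsMarkovChain κ 𝔉 X μ)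
    (hA : MeasurableSet A) (hD : MeasurableSet D) (n k : ℕ) :
    ∫⁻ ω in stayEvent X (D \ A) k, (reachStep κ A D)^[n] 0 (X k ω) ∂μ
      ≤ μ (stayEvent X (D \ A) k ∩ reachEvent X A D) := by
  induction n generalizing k with
  | zero => simp
  | succ n ih =>
    rw [Function.iterate_succ_apply',
      h.setLIntegral_reachStep_eq hA hD (measurable_iterate_reachStep hA hD n)]
    exact (add_le_add_right (ih (k + 1)) _).trans
      (measure_add_measure_stayEvent_le (h.measurable k hA))

theorem IsMarkovChain.reachValue_le_measure_reachEvent [IsProbabilityMeasure μ]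
    (h : IsMarkovChain κ 𝔉 X μ) (hA : MeasurableSet A) (hD : MeasurableSet D) {x : S}
    (hX0 : ∀ᵐ ω ∂μ, X 0 ω = x) : reachValue κ A D x ≤ μ (reachEvent X A D) := by
  refine iSup_le fun n ↦ ?_
  calc (reachStep κ A D)^[n] 0 x = ∫⁻ _, (reachStep κ A D)^[n] 0 x ∂μ := by simp
    _ = ∫⁻ ω, (reachStep κ A D)^[n] 0 (X 0 ω) ∂μ :=
        lintegral_congr_ae (hX0.mono fun ω hω ↦ by simp only [hω])
    _ ≤ μ (reachEvent X A D) := by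
        simpa [stayEvent_zero] using h.setLIntegral_iterate_reachStep_le hA hD n 0

lemma isMarkovChain_of_condExp_eq [IsFiniteMeasure μ] [IsFiniteKernel κ] (hX : Adapted 𝔉 X)
    (h : ∀ k s, MeasurableSet s →
      μ[fun ω ↦ s.indicator (1 : S → ℝ) (X (k + 1) ω) | 𝔉 k] =ᵐ[μ] fun ω ↦ (κ (X k ω)).real s) :
    IsMarkovChain κ 𝔉 X μ where
  adapted := hX
  map_succ k F hF := by
    have hXm (k : ℕ) : Measurable (X k) := (hX k).mono (𝔉.le k) le_rfl
    ext s hs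
    have hsX : MeasurableSet (X (k + 1) ⁻¹' s) := hXm _ hs
    have hint : Integrable (fun ω ↦ (κ (X k ω)).real s) μ :=
      integrable_condExp.congr (h k s hs)
    have hreal : (μ.restrict F).real (X (k + 1) ⁻¹' s) = ∫ ω in F, (κ (X k ω)).real s ∂μ := by
      rw [← integral_indicator_one hsX, ← setIntegral_congr_ae (𝔉.le k _ hF)
        ((h k s hs).mono fun ω hω _ ↦ hω), setIntegral_condExp (𝔉.le k) _ hF]
      · rfl
      · exact (integrable_const (1 : ℝ)).indicator hsX
    rw [Measure.map_apply (hXm _) hs, Measure.bind_apply hs κ.measurable.aemeasurable,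
      lintegral_map (κ.measurable_coe hs) (hXm k), ← ofReal_measureReal, hreal,
      ofReal_integral_eq_lintegral_ofReal hint.integrableOn (.of_forall fun _ ↦ measureReal_nonneg)]
    simp

end MarkovChain

section Walk

lemma abs_indicator_one_le_one {α : Type*} (s : Set α) (y : α) :
    |s.indicator (1 : α → ℝ) y| ≤ 1 := by
  by_cases hy : y ∈ s <;> simp [hy]

lemma measurable_of_measurable_integral_add {G : Type*} [AddGroup G] [MeasurableSpace G]
    [MeasurableAdd₂ G] [MeasurableNeg G] {ν : G → Measure G} (hν : ∀ x, IsProbabilityMeasure (ν x))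
    (h : ∀ w : G → ℝ, Measurable w → (∃ M, ∀ y, |w y| ≤ M) →
      Measurable fun x ↦ ∫ z, w (x + z) ∂ν x) : Measurable ν := by
  have hmap : Measurable fun x ↦ (ν x).map (x + ·) := by
    refine Measure.measurable_of_measurable_coe _ fun s hs ↦ ?_
    convert (h _ (measurable_one.indicator hs) ⟨1, abs_indicator_one_le_one s⟩).ennreal_ofReal
      with x
    rw [Measure.map_apply (by fun_prop) hs, ← ofReal_measureReal,
      ← integral_indicator_one (measurable_const_add x hs)]
    rfl
  let κ : Kernel G G := ⟨fun x ↦ (ν x).map (x + ·), hmap⟩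
  have : IsMarkovKernel κ := ⟨fun x ↦ Measure.isProbabilityMeasure_map (by fun_prop)⟩
  have hκ : ν = (Kernel.id ×ₖ κ).map fun p ↦ -p.1 + p.2 := by
    ext x s hs
    have hsub : Measurable fun p : G × G ↦ -p.1 + p.2 := by fun_prop
    rw [Kernel.map_apply' _ hsub _ hs, Kernel.id_prod_apply' _ _ (hsub hs)]
    change _ = (ν x).map (x + ·) _
    rw [Measure.map_apply (by fun_prop) (measurable_prodMk_left (hsub hs))]
    simp [Set.preimage]
  rw [hκ]
  exact Kernel.measurable _

variable {E : Type*} [NormedAddCommGroup E] [InnerProductSpace ℝ E] [FiniteDimensional ℝ E]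
  [MeasurableSpace E] [BorelSpace E] {Λ β ε : ℝ}

/-- The law that samples `ν` with probability `1 - β` and the uniform law of the unit ball with
probability `β`. -/
def noisyLaw (β : ℝ) (ν : Measure E) : Measure E :=
  ENNReal.ofReal (1 - β) • ν + ENNReal.ofReal β • volume[|ball (0 : E) 1]

lemma measurable_noisyLaw : Measurable (noisyLaw (E := E) β) := by
  refine Measure.measurable_of_measurable_coe _ fun s hs ↦ ?_
  simp only [noisyLaw, Measure.add_apply, Measure.smul_apply]
  exact ((Measure.measurable_coe hs).const_mul _).add_const _

lemma isStepLaw_noisyLaw (hΛ : 1 ≤ Λ) (hβ : β ∈ Set.Icc 0 1) {ν : Measure E}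
    [IsProbabilityMeasure ν] (hνΛ : ν (closedBall 0 Λ)ᶜ = 0)
    (hνneg : ∀ s, MeasurableSet s → ν s = ν (-s)) : IsStepLaw Λ β (noisyLaw β ν) where
  isProbabilityMeasure := ⟨by
    simp [noisyLaw, ← ENNReal.ofReal_add (sub_nonneg.2 hβ.2) hβ.1]⟩
  measure_compl_closedBall := by
    have hdisj : ball (0 : E) 1 ∩ (closedBall 0 Λ)ᶜ = ∅ :=
      Set.disjoint_iff_inter_eq_empty.1 <| Set.disjoint_compl_right_iff_subset.2 <|
        ball_subset_closedBall.trans (closedBall_subset_closedBall hΛ)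
    simp [noisyLaw, hνΛ, ProbabilityTheory.cond_apply, measurableSet_ball, hdisj]
  isNegInvariant := ⟨by
    ext s hs
    simp only [noisyLaw, Measure.neg_apply, Measure.add_apply, Measure.smul_apply, ← hνneg s hs,
      Measure.measure_neg]⟩
  smul_cond_le := Measure.le_add_left le_rfl

lemma integral_noisyLaw (hβ : β ∈ Set.Icc 0 1) (hε : 0 < ε) {ν : Measure E} [IsFiniteMeasure ν]
    (x : E) {g : E → ℝ} (hg : Measurable g) {M : ℝ} (hM : ∀ y, |g y| ≤ M) :
    ∫ z, g (x + ε • z) ∂noisyLaw β ν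
      = (1 - β) * ∫ z, g (x + ε • z) ∂ν + β * ⨍ y in ball x ε, g y := by
  have hint (m : Measure E) [IsFiniteMeasure m] : Integrable (fun z ↦ g (x + ε • z)) m :=
    .of_bound (hg.comp (by fun_prop)).aestronglyMeasurable M (.of_forall fun _ ↦ hM _)
  rw [setAverage_ball_eq_integral_cond hε x hg, noisyLaw,
    integral_add_measure ((hint _).smul_measure ENNReal.ofReal_ne_top)
      ((hint _).smul_measure ENNReal.ofReal_ne_top),
    integral_smul_measure, integral_smul_measure, ENNReal.toReal_ofReal (sub_nonneg.2 hβ.2),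
    ENNReal.toReal_ofReal hβ.1, smul_eq_mul, smul_eq_mul]

/-- The transition kernel of the walk that moves from `x` to `x + ε z`, with `z` drawn from
`ρ x`. -/
def walkKernel (ε : ℝ) (ρ : Kernel E E) : Kernel E E :=
  (Kernel.id ×ₖ ρ).map fun p ↦ p.1 + ε • p.2

variable {ρ : Kernel E E} [IsMarkovKernel ρ]

instance isMarkovKernel_walkKernel : IsMarkovKernel (walkKernel ε ρ) :=
  Kernel.IsMarkovKernel.map _ (by fun_prop)

lemma lintegral_walkKernel (x : E) {f : E → ℝ≥0∞} (hf : Measurable f) :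
    ∫⁻ y, f y ∂walkKernel ε ρ x = ∫⁻ z, f (x + ε • z) ∂ρ x := by
  have hstep : Measurable fun p : E × E ↦ p.1 + ε • p.2 := by fun_prop
  rw [walkKernel, Kernel.lintegral_map _ hstep _ hf]
  exact Kernel.lintegral_id_prod (hf.comp hstep) ρ x

lemma walkKernel_apply (x : E) {s : Set E} (hs : MeasurableSet s) :
    walkKernel ε ρ x s = ρ x ((fun z ↦ x + ε • z) ⁻¹' s) := by
  rw [← lintegral_indicator_one hs, lintegral_walkKernel x (measurable_one.indicator hs),
    ← lintegral_indicator_one ((by fun_prop : Measurable fun z ↦ x + ε • z) hs)]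
  rfl

lemma isSupersolution_toReal_reachValue {A D : Set E} (hA : MeasurableSet A)
    (hD : MeasurableSet D) :
    IsSupersolution ε ρ D fun x ↦ (reachValue (walkKernel ε ρ) A D x).toReal where
  measurable := (measurable_reachValue hA hD).ennreal_toReal
  nonneg _ := ENNReal.toReal_nonneg
  bounded := ⟨1, fun x ↦ ENNReal.toReal_le_of_le_ofReal zero_le_one
    ((reachValue_le_one x).trans_eq ENNReal.ofReal_one.symm)⟩
  integral_le x hx := by
    have hmeas := measurable_reachValue (κ := walkKernel ε ρ) hA hD
    have hfin (y : E) : reachValue (walkKernel ε ρ) A D y < ∞ :=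
      (reachValue_le_one y).trans_lt ENNReal.one_lt_top
    rw [integral_toReal (by fun_prop) (.of_forall fun _ ↦ hfin _), ← lintegral_walkKernel x hmeas]
    exact ENNReal.toReal_mono (hfin x).ne (lintegral_reachValue_le hA hD hx)

lemma isMarkovChain_walkKernel_noisyLaw (hβ : β ∈ Set.Icc 0 1) (hε : 0 < ε) {ν : E → Measure E}
    (hν : ∀ x, IsProbabilityMeasure (ν x)) (hρν : ∀ x, ρ x = noisyLaw β (ν x)) {Ω : Type*}
    {m0 : MeasurableSpace Ω} {μ : Measure Ω} [IsFiniteMeasure μ] {𝔉 : Filtration ℕ m0}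
    {X : ℕ → Ω → E} (hX : Adapted 𝔉 X)
    (h : ∀ (k : ℕ) (g : E → ℝ), Measurable g → (∃ M, ∀ y, |g y| ≤ M) →
      μ[fun ω ↦ g (X (k + 1) ω) | 𝔉 k] =ᵐ[μ] fun ω ↦
        (1 - β) * ∫ z, g (X k ω + ε • z) ∂ν (X k ω) + β * ⨍ y in ball (X k ω) ε, g y) :
    IsMarkovChain (walkKernel ε ρ) 𝔉 X μ := by
  refine isMarkovChain_of_condExp_eq hX fun k s hs ↦ ?_
  have hs_meas : Measurable (s.indicator (1 : E → ℝ)) := measurable_one.indicator hs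
  refine (h k _ hs_meas ⟨1, abs_indicator_one_le_one s⟩).trans (.of_forall fun ω ↦ ?_)
  have hstep : Measurable fun z : E ↦ X k ω + ε • z := by fun_prop
  dsimp only
  rw [← integral_noisyLaw hβ hε _ hs_meas (abs_indicator_one_le_one s), ← hρν,
    measureReal_def, walkKernel_apply _ hs, ← measureReal_def, ← integral_indicator_one (hstep hs)]
  rfl

end Walk

section MainTheorem

lemma exists_monotoneOn_of_forall_exists {P : ℝ → ℝ → Prop} (hP : ∀ a > 0, ∃ c > 0, P a c)
    (hleft : ∀ ⦃a b c⦄, a ≤ b → P a c → P b c) (hright : ∀ ⦃a b c⦄, b ≤ c → P a c → P a b) :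
    ∃ φ : ℝ → ℝ, (∀ a > 0, φ a ∈ Set.Ioo 0 1) ∧ MonotoneOn φ (Set.Ioi 0) ∧ ∀ a > 0, P a (φ a) := by
  set s : ℝ → Set ℝ := fun a ↦ {c | c ≤ 1 ∧ P a c}
  have hbdd (a : ℝ) : BddAbove (s a) := ⟨1, fun c hc ↦ hc.1⟩
  have hpos : ∀ a > 0, 0 < sSup (s a) := fun a ha ↦ by
    obtain ⟨c, hc, hac⟩ := hP a ha
    exact (lt_min hc one_pos).trans_le
      (le_csSup (hbdd a) ⟨min_le_right c 1, hright (min_le_left c 1) hac⟩)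
  have hne : ∀ a > 0, (s a).Nonempty := fun a ha ↦
    Set.nonempty_iff_ne_empty.2 fun h ↦ by simpa [h] using hpos a ha
  refine ⟨fun a ↦ sSup (s a) / 2, fun a ha ↦ ⟨half_pos (hpos a ha), ?_⟩, fun a ha b _ hab ↦ ?_,
    fun a ha ↦ ?_⟩
  · linarith [csSup_le (hne a ha) fun c hc ↦ hc.1]
  · exact div_le_div_of_nonneg_right
      (csSup_le_csSup (hbdd b) (hne a ha) fun c hc ↦ ⟨hc.1, hleft hab hc.2⟩) zero_le_two
  · obtain ⟨c, hc, hlt⟩ := exists_lt_of_lt_csSup (hne a ha) (half_lt_self (hpos a ha))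
    exact hright hlt.le hc.2

theorem exists_monotoneOn_lt_reachValue (ι : Type*) [Fintype ι] [Nonempty ι] {Λ β : ℝ}
    (hΛ : 1 ≤ Λ) (hβ : 0 < β) : ∃ ε₀ > 0, ∃ φ : ℝ → ℝ, (∀ a > 0, φ a ∈ Set.Ioo 0 1) ∧
      MonotoneOn φ (Set.Ioi 0) ∧ ∀ ε ∈ Set.Ioo 0 ε₀,
      ∀ ρ : Kernel (EuclideanSpace ℝ ι) (EuclideanSpace ℝ ι), (∀ x, IsStepLaw Λ β (ρ x)) →
      ∀ D, MeasurableSet D → ball 0 (5 * √(Fintype.card ι)) ⊆ D →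
      ∀ A, MeasurableSet A → A ⊆ unitCell ι → 0 < volume A →
      ∀ x ∈ unitCell ι,
        ENNReal.ofReal (φ (volume A).toReal) < reachValue (walkKernel ε ρ) A D x := by
  obtain ⟨ε₀, hε₀, hlower⟩ := exists_lt_of_isSupersolution ι hΛ hβ
  obtain ⟨φ, hφ, hφmono, hφlower⟩ := exists_monotoneOn_of_forall_exists hlower
    (fun a b c hab hc ε hε ρ hρ u hu hvol ↦
      hc ε hε ρ hρ u hu ((ENNReal.ofReal_le_ofReal hab).trans hvol))
    (fun a b c hbc hc ε hε ρ hρ u hu hvol x hx ↦ hbc.trans_lt (hc ε hε ρ hρ u hu hvol x hx))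
  refine ⟨ε₀, hε₀, φ, hφ, hφmono, fun ε hε ρ hρ D hD hballD A hA hAQ hA0 x hx ↦ ?_⟩
  have : IsMarkovKernel ρ := ⟨fun x ↦ (hρ x).isProbabilityMeasure⟩
  have hA_fin : volume A ≠ ∞ :=
    measure_ne_top_of_subset hAQ (volume_unitCell.trans_ne ENNReal.one_ne_top)
  have hA_pos : 0 < (volume A).toReal := ENNReal.toReal_pos hA0.ne' hA_fin
  rw [ENNReal.ofReal_lt_iff_lt_toReal (hφ _ hA_pos).1.le
    ((reachValue_le_one x).trans_lt ENNReal.one_lt_top).ne]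
  refine hφlower _ hA_pos ε hε ρ hρ _ ((isSupersolution_toReal_reachValue hA hD).mono hballD)
    ((ENNReal.ofReal_toReal hA_fin).trans_le (measure_mono fun y hy ↦ ⟨?_, hAQ hy⟩)) x hx
  simp [reachValue_of_mem hy]

variable {N : ℕ}

lemma measurableSet_cubeO (r : ℝ) : MeasurableSet (cubeO N r) := by
  rw [cubeO, Set.ofPred_forall]
  exact .iInter fun i ↦ measurableSet_lt (by fun_prop) measurable_const

lemma cubeO_one_subset_unitCell : cubeO N 1 ⊆ unitCell (Fin N) := fun _ hx i ↦
  ⟨(abs_lt.1 (hx i)).1.le, (abs_lt.1 (hx i)).2⟩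

lemma ball_subset_cubeO (r : ℝ) : ball 0 (r / 2) ⊆ cubeO N r := fun x hx i ↦
  (PiLp.norm_apply_le x i).trans_lt (mem_ball_zero_iff.1 hx)

end MainTheorem

/-- a set of positive measure in `Q₁` is reached, before exiting
`Q_{10√N}`, with probability bounded below by a nondecreasing function of its measure,
uniformly in `ε < ε₀`, in the family `(ν_x)` and in the starting point. -/
theorem reach_positive_measure (N : ℕ) (hN : 1 ≤ N) (Λ β : ℝ) (hΛ : 1 ≤ Λ)
    (hβ : β ∈ Set.Ioc (0 : ℝ) 1) :
    ∃ (ε₀ : ℝ) (φ : ℝ → ℝ), 0 < ε₀ ∧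
      (∀ a ∈ Set.Ioo (0 : ℝ) 1, φ a ∈ Set.Ioo (0 : ℝ) 1) ∧
      MonotoneOn φ (Set.Ioo (0 : ℝ) 1) ∧
      ∀ ε : ℝ, 0 < ε → ε < ε₀ →
      ∀ (ν : EuclideanSpace ℝ (Fin N) → Measure (EuclideanSpace ℝ (Fin N))),
        (∀ x, IsProbabilityMeasure (ν x)) →
        (∀ x, ν x (closedBall (0 : EuclideanSpace ℝ (Fin N)) Λ)ᶜ = 0) →
        (∀ x (E : Set (EuclideanSpace ℝ (Fin N))), MeasurableSet E → ν x E = ν x (-E)) →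
        (∀ w : EuclideanSpace ℝ (Fin N) → ℝ, Measurable w → (∃ M, ∀ y, |w y| ≤ M) →
          Measurable fun x => ∫ z, w (x + z) ∂ν x) →
      ∀ (A : Set (EuclideanSpace ℝ (Fin N))), MeasurableSet A → A ⊆ cubeO N 1 →
        0 < volume A →
      ∀ x ∈ cubeO N 1,
      ∀ (Ωhat : Type) [m0 : MeasurableSpace Ωhat] (μ : Measure Ωhat),
        IsProbabilityMeasure μ →
      ∀ (𝔉 : Filtration ℕ m0) (X : ℕ → Ωhat → EuclideanSpace ℝ (Fin N)),
        Adapted 𝔉 X → (∀ᵐ ω ∂μ, X 0 ω = x) →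
        (∀ (k : ℕ) (g : EuclideanSpace ℝ (Fin N) → ℝ), Measurable g →
          (∃ M, ∀ y, |g y| ≤ M) →
          (μ[(fun ω => g (X (k + 1) ω)) | 𝔉 k]) =ᵐ[μ]
            fun ω => (1 - β) * ∫ z, g (X k ω + ε • z) ∂ν (X k ω) +
              β * ⨍ y in ball (X k ω) ε, g y) →
        ENNReal.ofReal (φ (volume A).toReal) <
          μ {ω | ∃ k : ℕ, X k ω ∈ A ∧
            ∀ j < k, X j ω ∈ cubeO N (10 * Real.sqrt N)} := by
  have : Nonempty (Fin N) := ⟨⟨0, hN⟩⟩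
  have hβ' : β ∈ Set.Icc 0 1 := Set.Ioc_subset_Icc_self hβ
  obtain ⟨ε₀, hε₀, φ, hφ, hφmono, hlt⟩ := exists_monotoneOn_lt_reachValue (Fin N) hΛ hβ.1
  refine ⟨ε₀, φ, hε₀, fun a ha ↦ hφ a ha.1, hφmono.mono Set.Ioo_subset_Ioi_self, ?_⟩
  intro ε hε hεε₀ ν hν hνΛ hνneg hνmeas A hA hAQ hA0 x hx Ω m0 μ hμ 𝔉 X hX hX0 hcond
  let ρ : Kernel (EuclideanSpace ℝ (Fin N)) (EuclideanSpace ℝ (Fin N)) :=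
    ⟨fun x ↦ noisyLaw β (ν x),
      measurable_noisyLaw.comp (measurable_of_measurable_integral_add hν hνmeas)⟩
  have hρ (x) : IsStepLaw Λ β (ρ x) := isStepLaw_noisyLaw hΛ hβ' (hνΛ x) (hνneg x)
  have : IsMarkovKernel ρ := ⟨fun x ↦ (hρ x).isProbabilityMeasure⟩
  have hchain : IsMarkovChain (walkKernel ε ρ) 𝔉 X μ :=
    isMarkovChain_walkKernel_noisyLaw hβ' hε hν (fun _ ↦ rfl) hX hcond
  have hD : MeasurableSet (cubeO N (10 * √N)) := measurableSet_cubeO _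
  have hballD : ball 0 (5 * √(Fintype.card (Fin N))) ⊆ cubeO N (10 * √N) := by
    rw [Fintype.card_fin, show 5 * √N = 10 * √N / 2 by ring]
    exact ball_subset_cubeO _
  calc ENNReal.ofReal (φ (volume A).toReal)
      < reachValue (walkKernel ε ρ) A (cubeO N (10 * √N)) x :=
        hlt ε ⟨hε, hεε₀⟩ ρ hρ _ hD hballD A hA (hAQ.trans cubeO_one_subset_unitCell) hA0 x
          (cubeO_one_subset_unitCell hx)
    _ ≤ _ := hchain.reachValue_le_measure_reachEvent hA hD hX0
end
end

section
/- Let O : (0,∞) → [0,∞) be nondecreasing, let λ ∈ (0,1), k > 1 with λk² > 1, let ξ > 0 and K ≥ 0, and assume that O(s) ≤ λ O(ks) + K s² for every s > ξ. Then, with γ = log(1/λ)/log k, for all ρ and R with R ≥ ρ > ξ one has O(ρ) ≤ (1/λ) (ρ/R)^γ ( O(R) + K R² / (λk² − 1) ). -/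
/-!
Adding `K * s ^ p / (lam * k ^ p - 1)` to `O s` absorbs the inhomogeneous term: the sum `f` is
still nondecreasing and satisfies `f s ≤ lam * f (k * s)`. Choose `n` with
`k ^ n * ρ ≤ R < k ^ (n + 1) * ρ`. Iterating `n` times gives `f ρ ≤ lam ^ n * f R`, and the upper
bound on `R` turns the discrete decay `lam ^ n` into the power `(1 / lam) * (ρ / R) ^ γ`; the factor
`1 / lam` pays for rounding `log (R / ρ) / log k` down to `n`.
-/

open Set

lemma pow_le_rpow_logb {b c x : ℝ} {n : ℕ} (hb : 1 < b) (hc₀ : 0 < c) (hc₁ : c ≤ 1)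
    (hx : 0 < x) (hxb : x ≤ b ^ n) : c ^ n ≤ x ^ Real.logb b c := by
  have hb₀ : 0 < b := zero_lt_one.trans hb
  calc
    c ^ n = (b ^ Real.logb b c) ^ n := by rw [Real.rpow_logb hb₀ hb.ne' hc₀]
    _ = (b ^ n) ^ Real.logb b c := Real.rpow_pow_comm hb₀.le _ n
    _ ≤ x ^ Real.logb b c :=
      Real.rpow_le_rpow_of_nonpos hx hxb (Real.logb_nonpos hb hc₀.le hc₁)

lemma exists_pow_mul_le_and_pow_le_rpow {c k ρ R : ℝ} (hc₀ : 0 < c) (hc₁ : c ≤ 1) (hk : 1 < k)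
    (hρ : 0 < ρ) (hρR : ρ ≤ R) :
    ∃ n : ℕ, k ^ n * ρ ≤ R ∧
      c ^ n ≤ (1 / c) * (ρ / R) ^ (Real.log (1 / c) / Real.log k) := by
  have hR : 0 < R := hρ.trans_le hρR
  obtain ⟨n, hn, hn'⟩ := exists_nat_pow_near ((one_le_div hρ).2 hρR) hk
  refine ⟨n, (le_div_iff₀ hρ).1 hn, ?_⟩
  have hpow : c ^ (n + 1) ≤ (R / ρ) ^ Real.logb k c :=
    pow_le_rpow_logb hk hc₀ hc₁ (div_pos hR hρ) hn'.le
  have hexp : (R / ρ) ^ Real.logb k c = (ρ / R) ^ (Real.log (1 / c) / Real.log k) := by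
    rw [Real.log_div_log, one_div, Real.logb_inv, Real.rpow_neg_eq_inv_rpow, inv_div]
  rwa [one_div_mul_eq_div, le_div_iff₀ hc₀, ← pow_succ, ← hexp]

lemma le_pow_mul_apply_pow_mul {S T : Type*} [Semiring S] [PartialOrder S] [IsOrderedRing S]
    [Semiring T] [PartialOrder T] [IsOrderedRing T] {f : S → T} {k ρ R : S} {c : T} {n : ℕ}
    (hc : 0 ≤ c) (hk : 1 ≤ k) (hρ : 0 ≤ ρ) (hn : k ^ n * ρ ≤ R)
    (hf : ∀ s, ρ ≤ s → k * s ≤ R → f s ≤ c * f (k * s)) :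
    f ρ ≤ c ^ n * f (k ^ n * ρ) := by
  induction n with
  | zero => simp
  | succ n ih =>
    have hnext : k * (k ^ n * ρ) = k ^ (n + 1) * ρ := by rw [← mul_assoc, ← pow_succ']
    have hle : k ^ n * ρ ≤ R :=
      (mul_le_mul_of_nonneg_right (pow_le_pow_right₀ hk n.le_succ) hρ).trans hn
    calc
      f ρ ≤ c ^ n * f (k ^ n * ρ) := ih hle
      _ ≤ c ^ n * (c * f (k * (k ^ n * ρ))) :=
        mul_le_mul_of_nonneg_left
          (hf _ (le_mul_of_one_le_left hρ (one_le_pow₀ hk)) (hnext.trans_le hn)) (pow_nonneg hc n)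
      _ = c ^ (n + 1) * f (k ^ (n + 1) * ρ) := by rw [hnext, ← mul_assoc, ← pow_succ]

lemma apply_le_rpow_mul_of_apply_le_mul {f : ℝ → ℝ} {c k ρ R : ℝ} (hc₀ : 0 < c) (hc₁ : c ≤ 1)
    (hk : 1 < k) (hρ : 0 < ρ) (hρR : ρ ≤ R) (hmono : MonotoneOn f (Icc ρ R)) (hfR : 0 ≤ f R)
    (hf : ∀ s, ρ ≤ s → k * s ≤ R → f s ≤ c * f (k * s)) :
    f ρ ≤ (1 / c) * (ρ / R) ^ (Real.log (1 / c) / Real.log k) * f R := by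
  obtain ⟨n, hn, hpow⟩ := exists_pow_mul_le_and_pow_le_rpow hc₀ hc₁ hk hρ hρR
  have hmem : k ^ n * ρ ∈ Icc ρ R :=
    ⟨le_mul_of_one_le_left hρ.le (one_le_pow₀ hk.le), hn⟩
  calc
    f ρ ≤ c ^ n * f (k ^ n * ρ) := le_pow_mul_apply_pow_mul hc₀.le hk.le hρ.le hn hf
    _ ≤ c ^ n * f R := by gcongr; exact hmono hmem (right_mem_Icc.2 hρR) hn
    _ ≤ _ := by gcongr

lemma add_mul_rpow_div_le_mul_add {x y c k K s p : ℝ} (hk : 0 ≤ k) (hs : 0 ≤ s)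
    (hckp : c * k ^ p ≠ 1) (h : x ≤ c * y + K * s ^ p) :
    x + K * s ^ p / (c * k ^ p - 1) ≤ c * (y + K * (k * s) ^ p / (c * k ^ p - 1)) := by
  have habsorb : c * (K * (k * s) ^ p / (c * k ^ p - 1)) =
      K * s ^ p + K * s ^ p / (c * k ^ p - 1) := by
    rw [Real.mul_rpow hk hs]
    field_simp [sub_ne_zero.2 hckp]
    ring
  linarith

theorem iteration_lemma_general {O : ℝ → ℝ} {lam k K p ρ R : ℝ} (hlam₀ : 0 < lam)
    (hlam₁ : lam ≤ 1) (hk : 1 < k) (hlamk : 1 < lam * k ^ p) (hK : 0 ≤ K) (hρ : 0 < ρ)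
    (hρR : ρ ≤ R) (hOmono : MonotoneOn O (Icc ρ R)) (hOR : 0 ≤ O R)
    (hrec : ∀ s, ρ ≤ s → k * s ≤ R → O s ≤ lam * O (k * s) + K * s ^ p) :
    O ρ ≤ (1 / lam) * (ρ / R) ^ (Real.log (1 / lam) / Real.log k) *
      (O R + K * R ^ p / (lam * k ^ p - 1)) := by
  have hR : 0 < R := hρ.trans_le hρR
  have hk₀ : 0 < k := zero_lt_one.trans hk
  have hd : 0 < lam * k ^ p - 1 := sub_pos.2 hlamk
  have hp : 0 < p := by
    by_contra! hp
    exact hlamk.not_ge (mul_le_one₀ hlam₁ (by positivity)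
      (Real.rpow_le_one_of_one_le_of_nonpos hk.le hp))
  let f : ℝ → ℝ := fun s ↦ O s + K * s ^ p / (lam * k ^ p - 1)
  have hfmono : MonotoneOn f (Icc ρ R) := fun s hs t ht hst ↦ by
    have hs₀ : 0 ≤ s := hρ.le.trans hs.1
    have hOst : O s ≤ O t := hOmono hs ht hst
    dsimp only [f]
    gcongr
  have hfrec (s : ℝ) (hs : ρ ≤ s) (hsR : k * s ≤ R) : f s ≤ lam * f (k * s) :=
    add_mul_rpow_div_le_mul_add hk₀.le (hρ.le.trans hs) hlamk.ne' (hrec s hs hsR)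
  calc
    O ρ ≤ f ρ := le_add_of_nonneg_right (by positivity)
    _ ≤ _ := apply_le_rpow_mul_of_apply_le_mul hlam₀ hlam₁ hk hρ hρR hfmono (by positivity) hfrec

/-- iteration lemma. If `O` is nondecreasing on `(0,∞)` and
`O(s) ≤ λ O(ks) + K s²` for all `s > ξ`, with `λ ∈ (0,1)`, `k > 1`, `λk² > 1`, then
`O(ρ) ≤ (1/λ)(ρ/R)^γ (O(R) + K R²/(λk² − 1))` for `R ≥ ρ > ξ`,
where `γ = log(1/λ)/log k`. -/
theorem iteration_lemma (O : ℝ → ℝ) (hOnn : ∀ s, 0 < s → 0 ≤ O s)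
    (hOmono : ∀ s t, 0 < s → s ≤ t → O s ≤ O t)
    (lam k ξ K : ℝ) (hlam : lam ∈ Set.Ioo (0 : ℝ) 1) (hk : 1 < k)
    (hlamk : 1 < lam * k ^ 2) (hξ : 0 < ξ) (hK : 0 ≤ K)
    (hrec : ∀ s, ξ < s → O s ≤ lam * O (k * s) + K * s ^ 2) :
    ∀ ρ R : ℝ, ξ < ρ → ρ ≤ R →
      O ρ ≤ (1 / lam) * (ρ / R) ^ (Real.log (1 / lam) / Real.log k) *
        (O R + K * R ^ 2 / (lam * k ^ 2 - 1)) := by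
  intro ρ R hρ hR
  have hρ₀ : 0 < ρ := hξ.trans hρ
  simpa only [Real.rpow_two] using iteration_lemma_general (p := 2) hlam.1 hlam.2.le hk
    (by simpa only [Real.rpow_two] using hlamk) hK hρ₀ hR
    (fun s hs t _ hst ↦ hOmono s t (hρ₀.trans_le hs.1) hst) (hOnn R (hρ₀.trans_le hR))
    (fun s hs _ ↦ by simpa only [Real.rpow_two] using hrec s (hρ.trans_le hs))
end
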